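/- arXiv:1308.5392 — 2 statements merged into one kernel-verified Lean document; each statement's English description precedes it below -/
import Mathlib

section
/- For every number field F of degree d ≥ 2 over ℚ, the class number h_F satisfies h_F ≤ (2/π)^{r₂} · √D_F · (d - 1 + log D_F)^{d-1} / (d-1)!, where D_F is the absolute discriminant and r₂ the number of pairs of complex embeddings. In particular h_F ≪_d √D_F (log √D_F)^{d-1}. -/
open NumberField

theorem aux_pow (n : ℕ) (u v : ℝ) (hv : 0 ≤ v) (huv : v ≤ u) :
    v ^ (n + 1) + (n + 1) * v ^ n * (u - v) ≤ u ^ (n + 1) := by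
  induction n with
  | zero => simp
  | succ n ih =>
    have h1 := mul_le_mul_of_nonneg_left ih (hv.trans huv)
    have h2 : 0 ≤ ((n : ℝ) + 1) * v ^ n * (u - v) ^ 2 := by positivity
    push_cast
    have e : u * u ^ (n + 1) = u ^ (n + 1 + 1) := by ring
    rw [e] at h1
    refine le_trans (le_of_sub_nonneg ?_) h1
    have : u * (v ^ (n + 1) + (n + 1) * v ^ n * (u - v)) -
        (v ^ (n + 1 + 1) + (n + 1 + 1) * v ^ (n + 1) * (u - v)) =
        ((n : ℝ) + 1) * v ^ n * (u - v) ^ 2 := by ring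
    rw [this]
    exact h2

theorem aux_sum (n : ℕ) (a X : ℝ) (ha : 0 ≤ a) (N : ℕ) (hN : 1 ≤ N) (hNX : (N : ℝ) ≤ X) :
    ∑ k ∈ Finset.Icc 1 N, ((n : ℝ) + 1) * ((1 / (k : ℝ)) * (a + (Real.log X - Real.log k)) ^ n)
      ≤ (n + 1) * (a + Real.log X) ^ n + (a + Real.log X) ^ (n + 1)
        - (a + (Real.log X - Real.log N)) ^ (n + 1) := by
  induction N, hN using Nat.le_induction with
  | base => simp
  | succ N hN ih =>
    have hN0 : (1 : ℝ) ≤ N := by exact_mod_cast hN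
    push_cast at hNX
    have ih' := ih (by linarith)
    rw [Finset.sum_Icc_succ_top (by omega)]
    have hlog : Real.log ((N + 1 : ℕ) : ℝ) ≤ Real.log X :=
      Real.log_le_log (by positivity) (by push_cast; exact hNX)
    have hl : 1 / ((N + 1 : ℕ) : ℝ) ≤ Real.log ((N + 1 : ℕ) : ℝ) - Real.log N := by
      have := Real.log_le_sub_one_of_pos (x := (N : ℝ) / ((N + 1 : ℕ) : ℝ)) (by positivity)
      rw [Real.log_div (by positivity) (by positivity)] at this
      have e : (N : ℝ) / ((N + 1 : ℕ) : ℝ) - 1 = - (1 / ((N + 1 : ℕ) : ℝ)) := by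
        push_cast; field_simp; ring
      rw [e] at this
      linarith
    have hp : 0 < 1 / ((N + 1 : ℕ) : ℝ) := by positivity
    set v := a + (Real.log X - Real.log ((N + 1 : ℕ) : ℝ)) with hv
    set u := a + (Real.log X - Real.log (N : ℝ)) with hu
    have hv0 : 0 ≤ v := by linarith
    have key := aux_pow n u v hv0 (by linarith)
    have h3 : ((n : ℝ) + 1) * ((1 / ((N + 1 : ℕ) : ℝ)) * v ^ n) ≤ (n + 1) * v ^ n * (u - v) := by
      have h4 : 1 / ((N + 1 : ℕ) : ℝ) ≤ u - v := by linarith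
      have := mul_le_mul_of_nonneg_left h4 (by positivity : 0 ≤ ((n : ℝ) + 1) * v ^ n)
      linarith
    linarith

theorem aux_count (n : ℕ) : ∀ (X : ℝ), 1 ≤ X → ∀ S : Finset (Fin (n + 1) → ℕ),
    (∀ x ∈ S, (∀ i, 1 ≤ x i) ∧ ((∏ i, x i : ℕ) : ℝ) ≤ X) →
    (S.card : ℝ) ≤ X * (n + Real.log X) ^ n / n.factorial := by
  induction n with
  | zero =>
    intro X hX S hS
    have h1 : S.card ≤ (Finset.Icc 1 ⌊X⌋₊).card := by
      refine Finset.card_le_card_of_injOn (fun x => x 0) ?_ ?_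
      · intro x hx
        obtain ⟨h1, h2⟩ := hS x hx
        simp only [Finset.coe_Icc, Set.mem_Icc]
        refine ⟨h1 0, Nat.le_floor ?_⟩
        simpa using h2
      · intro x _ y _ hxy
        funext i
        fin_cases i
        exact hxy
    rw [Nat.card_Icc, Nat.add_sub_cancel] at h1
    have h2 : (S.card : ℝ) ≤ X := (Nat.cast_le.mpr h1).trans (Nat.floor_le (by linarith))
    simpa using h2
  | succ n ih =>
    intro X hX S hS
    have hN : 1 ≤ ⌊X⌋₊ := Nat.le_floor (by simpa using hX)
    have hNX : ((⌊X⌋₊ : ℕ) : ℝ) ≤ X := Nat.floor_le (by linarith)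
    have hmaps : ∀ x ∈ S, x 0 ∈ Finset.Icc 1 ⌊X⌋₊ := by
      intro x hx
      obtain ⟨h1, h2⟩ := hS x hx
      rw [Finset.mem_Icc]
      refine ⟨h1 0, Nat.le_floor (le_trans ?_ h2)⟩
      have : x 0 ≤ ∏ i, x i := Nat.le_of_dvd
        (Finset.prod_pos fun i _ => h1 i) (Finset.dvd_prod_of_mem _ (Finset.mem_univ _))
      exact_mod_cast this
    rw [Finset.card_eq_sum_card_fiberwise hmaps]
    have hfib : ∀ k ∈ Finset.Icc 1 ⌊X⌋₊, ((S.filter (fun x => x 0 = k)).card : ℝ) ≤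
        X / (n + 1).factorial *
          (((n : ℝ) + 1) * ((1 / (k : ℝ)) * (n + (Real.log X - Real.log k)) ^ n)) := by
      intro k hk
      rw [Finset.mem_Icc] at hk
      have hk0 : (1 : ℝ) ≤ k := by exact_mod_cast hk.1
      have hkX : (k : ℝ) ≤ X := le_trans (by exact_mod_cast hk.2) hNX
      have hinj : Set.InjOn (Fin.tail : (Fin (n + 2) → ℕ) → (Fin (n + 1) → ℕ))
          (S.filter (fun x => x 0 = k) : Finset (Fin (n + 2) → ℕ)) := by
        intro x hx y hy hxy
        simp only [Finset.coe_filter, Set.mem_ofPred_eq] at hx hy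
        rw [← Fin.cons_self_tail x, ← Fin.cons_self_tail y, hxy, hx.2, hy.2]
      rw [← Finset.card_image_of_injOn hinj]
      have := ih (X / k) (by rw [le_div_iff₀ (by positivity)]; linarith)
        ((S.filter (fun x => x 0 = k)).image Fin.tail) (by
          intro y hy
          rw [Finset.mem_image] at hy
          obtain ⟨x, hx, rfl⟩ := hy
          rw [Finset.mem_filter] at hx
          obtain ⟨h1, h2⟩ := hS x hx.1
          refine ⟨fun i => h1 i.succ, ?_⟩
          rw [Fin.prod_univ_succ, hx.2] at h2
          rw [le_div_iff₀ (by positivity), mul_comm]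
          push_cast at h2 ⊢
          exact h2)
      refine this.trans (le_of_eq ?_)
      rw [Real.log_div (by positivity) (by positivity), Nat.factorial_succ]
      push_cast
      have : (n.factorial : ℝ) ≠ 0 := by positivity
      field_simp
    push_cast
    refine (Finset.sum_le_sum hfib).trans ?_
    rw [← Finset.mul_sum]
    have hs := aux_sum n n X (by positivity) _ hN hNX
    have hL : 0 ≤ Real.log X := Real.log_nonneg hX
    have hLN : Real.log ((⌊X⌋₊ : ℕ) : ℝ) ≤ Real.log X :=
      Real.log_le_log (by exact_mod_cast hN) hNX
    have hnn : (0 : ℝ) ≤ n := by positivity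
    have h0 : 0 ≤ ((n : ℝ) + (Real.log X - Real.log ((⌊X⌋₊ : ℕ) : ℝ))) ^ (n + 1) :=
      pow_nonneg (by linarith) _
    have hp := aux_pow n (n + 1 + Real.log X) (n + Real.log X) (by positivity) (by linarith)
    have e : (n : ℝ) + 1 + Real.log X - (n + Real.log X) = 1 := by ring
    rw [e, mul_one] at hp
    rw [div_mul_eq_mul_div]
    gcongr
    linarith

theorem aux_label (K : Type) [Field K] [NumberField K] :
    ∃ l : Ideal (𝓞 K) → Fin (Module.finrank ℚ K), ∀ P Q : Ideal (𝓞 K),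
      P.IsPrime → Q.IsPrime → P ≠ ⊥ → P.under ℤ = Q.under ℤ → l P = l Q → P = Q := by
  classical
  have hpos : 0 < Module.finrank ℚ K := Module.finrank_pos
  have h : ∀ p : Ideal ℤ, ∃ f : Ideal (𝓞 K) → Fin (Module.finrank ℚ K),
      p.IsMaximal → p ≠ ⊥ →
      Set.InjOn f (IsDedekindDomain.primesOverFinset p (𝓞 K)) := by
    intro p
    by_cases hp : p.IsMaximal ∧ p ≠ ⊥
    · obtain ⟨h1, h2⟩ := hp
      have hc := Ideal.card_primesOverFinset_le_finrank (𝓞 K) ℚ K h2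
      obtain ⟨g⟩ := Function.Embedding.nonempty_of_card_le
        (α := IsDedekindDomain.primesOverFinset p (𝓞 K)) (β := Fin (Module.finrank ℚ K))
        (by rw [Fintype.card_coe, Fintype.card_fin]; exact hc)
      refine ⟨fun P => if hP : P ∈ IsDedekindDomain.primesOverFinset p (𝓞 K)
        then g ⟨P, hP⟩ else ⟨0, hpos⟩, fun _ _ => ?_⟩
      intro P hP Q hQ hPQ
      rw [Finset.mem_coe] at hP hQ
      simp only [hP, hQ, dif_pos] at hPQ
      simpa using g.injective hPQ
    · exact ⟨fun _ => ⟨0, hpos⟩, fun h1 h2 => absurd ⟨h1, h2⟩ hp⟩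
  choose f hf using h
  refine ⟨fun P => f (P.under ℤ) P, fun P Q hP hQ hP0 hu hl => ?_⟩
  have hpb : P.under ℤ ≠ ⊥ := Ideal.under_ne_bot ℤ hP0
  have hpp : (P.under ℤ).IsPrime := inferInstance
  have hm : (P.under ℤ).IsMaximal := hpp.isMaximal hpb
  refine hf (P.under ℤ) hm hpb ?_ ?_ (by simpa [hu] using hl)
  · rw [Finset.mem_coe, IsDedekindDomain.mem_primesOverFinset_iff hpb]
    exact ⟨hP, ⟨rfl⟩⟩
  · rw [Finset.mem_coe, IsDedekindDomain.mem_primesOverFinset_iff hpb]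
    exact ⟨hQ, ⟨hu⟩⟩

theorem aux_norm (K : Type) [Field K] [NumberField K] (P : Ideal (𝓞 K)) (hP : P.IsPrime)
    (h0 : P ≠ ⊥) : ∃ p f : ℕ, p.Prime ∧ f ≠ 0 ∧ P.under ℤ = Ideal.span {(p : ℤ)} ∧
      Ideal.absNorm P = p ^ f := by
  have : NeZero P := ⟨h0⟩
  have hp := Nat.absNorm_under_prime P
  have hs : P.under ℤ = Ideal.span {((Ideal.absNorm (P.under ℤ) : ℕ) : ℤ)} :=
    (Int.ideal_span_absNorm_eq_self _).symm
  have hl : P.LiesOver (Ideal.span {((Ideal.absNorm (P.under ℤ) : ℕ) : ℤ)}) := ⟨hs.symm⟩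
  have hn := Ideal.absNorm_eq_pow_inertiaDeg' P hp
  refine ⟨_, _, hp, ?_, hs, hn⟩
  intro hf
  rw [hf, pow_zero, Ideal.absNorm_eq_one_iff] at hn
  exact hP.ne_top hn

theorem aux_fact (K : Type) [Field K] [NumberField K] (P : Ideal (𝓞 K))
    (p f : ℕ) (hp : p.Prime) (hu : P.under ℤ = Ideal.span {(p : ℤ)})
    (hn : Ideal.absNorm P = p ^ f) [DecidableEq (Ideal (𝓞 K))]
    (s : Multiset (Ideal (𝓞 K)))
    (hs : ∀ Q ∈ s, Q.IsPrime ∧ Q ≠ ⊥ ∧ (Q.under ℤ = P.under ℤ → Q = P)) :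
    (s.map Ideal.absNorm).prod ≠ 0 ∧
    (s.map Ideal.absNorm).prod.factorization p = f * s.count P := by
  induction s using Multiset.induction_on with
  | empty => simp
  | cons Q s ih =>
    obtain ⟨h1, h2⟩ := ih fun R hR => hs R (Multiset.mem_cons_of_mem hR)
    obtain ⟨hQ, hQ0, hQP⟩ := hs Q (Multiset.mem_cons_self _ _)
    have hN0 : Ideal.absNorm Q ≠ 0 := by rwa [Ne, Ideal.absNorm_eq_zero_iff]
    rw [Multiset.map_cons, Multiset.prod_cons]
    refine ⟨mul_ne_zero hN0 h1, ?_⟩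
    rw [Nat.factorization_mul hN0 h1, Finsupp.add_apply, h2]
    by_cases h : Q = P
    · subst h
      rw [Multiset.count_cons_self, hn, hp.factorization_pow, Finsupp.single_eq_same]
      ring
    · rw [Multiset.count_cons_of_ne (Ne.symm h)]
      obtain ⟨q, g, hq, hg, hqu, hqn⟩ := aux_norm K Q hQ hQ0
      have hne : q ≠ p := by
        rintro rfl
        exact h (hQP (hqu.trans hu.symm))
      rw [hqn, hq.factorization_pow, Finsupp.single_eq_of_ne hne.symm, zero_add]

theorem aux_tuple (K : Type) [Field K] [NumberField K] :
    ∃ t : Ideal (𝓞 K) → (Fin (Module.finrank ℚ K) → ℕ),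
      (∀ I : Ideal (𝓞 K), I ≠ ⊥ → (∀ i, 1 ≤ t I i) ∧ ∏ i, t I i = Ideal.absNorm I) ∧
      (∀ I J : Ideal (𝓞 K), I ≠ ⊥ → J ≠ ⊥ → t I = t J → I = J) := by
  classical
  obtain ⟨l, hl⟩ := aux_label K
  have hfac : ∀ I Q : Ideal (𝓞 K),
      Q ∈ UniqueFactorizationMonoid.normalizedFactors I → Q.IsPrime ∧ Q ≠ ⊥ := by
    intro I Q hQ
    have hp := UniqueFactorizationMonoid.prime_of_normalized_factor Q hQ
    exact ⟨Ideal.isPrime_of_prime hp, hp.ne_zero⟩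
  refine ⟨fun I i => (((UniqueFactorizationMonoid.normalizedFactors I).filter
    (fun P => l P = i)).map Ideal.absNorm).prod, ?_, ?_⟩
  · intro I hI
    constructor
    · intro i
      rw [Nat.one_le_iff_ne_zero, Ne, Multiset.prod_eq_zero_iff, Multiset.mem_map]
      rintro ⟨Q, hQ, h0⟩
      rw [Ideal.absNorm_eq_zero_iff] at h0
      exact (hfac I Q (Multiset.mem_of_mem_filter hQ)).2 h0
    · have key : ∀ s : Multiset (Ideal (𝓞 K)),
          ∏ i, ((s.filter (fun P => l P = i)).map Ideal.absNorm).prod = Ideal.absNorm s.prod := by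
        intro s
        induction s using Multiset.induction_on with
        | empty => simp
        | cons Q s ih =>
          rw [Multiset.prod_cons, map_mul, ← ih]
          have : ∀ i, (((Q ::ₘ s).filter (fun P => l P = i)).map Ideal.absNorm).prod =
              (if l Q = i then Ideal.absNorm Q else 1) *
                ((s.filter (fun P => l P = i)).map Ideal.absNorm).prod := by
            intro i
            by_cases h : l Q = i
            · rw [Multiset.filter_cons_of_pos (p := fun P => l P = i) _ h]; simp [h]
            · rw [Multiset.filter_cons_of_neg (p := fun P => l P = i) _ h]; simp [h]
          simp_rw [this]
          rw [Finset.prod_mul_distrib]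
          simp
      rw [key, Ideal.prod_normalizedFactors_eq_self hI]
  · intro I J hI hJ h
    rw [← Ideal.prod_normalizedFactors_eq_self hI, ← Ideal.prod_normalizedFactors_eq_self hJ]
    congr 1
    ext P
    by_cases hP : P.IsPrime ∧ P ≠ ⊥
    · obtain ⟨p, f, hp, hf, hu, hn⟩ := aux_norm K P hP.1 hP.2
      have main : ∀ I : Ideal (𝓞 K), (((UniqueFactorizationMonoid.normalizedFactors I).filter
          (fun Q => l Q = l P)).map Ideal.absNorm).prod.factorization p =
          f * (UniqueFactorizationMonoid.normalizedFactors I).count P := by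
        intro I
        rw [(aux_fact K P p f hp hu hn _ ?_).2, Multiset.count_filter_of_pos (p := fun Q => l Q = l P) rfl]
        intro Q hQ
        rw [Multiset.mem_filter] at hQ
        obtain ⟨h1, h2⟩ := hfac I Q hQ.1
        exact ⟨h1, h2, fun h3 => hl Q P h1 hP.1 h2 h3 hQ.2⟩
      have h1 := main I
      have h2 := main J
      have h3 := congrFun h (l P)
      simp only at h3
      rw [h3, h2] at h1
      exact (Nat.eq_of_mul_eq_mul_left (Nat.pos_of_ne_zero hf) h1).symm
    · rw [Multiset.count_eq_zero_of_notMem fun h => hP (hfac I P h),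
        Multiset.count_eq_zero_of_notMem fun h => hP (hfac J P h)]

theorem aux_factorial (n : ℕ) :
    ((n + 1).factorial : ℝ) * 2 ^ n ≤ ((n + 1 : ℕ) : ℝ) ^ (n + 1) := by
  induction n with
  | zero => simp
  | succ n ih =>
    have h := aux_pow n ((n + 1 + 1 : ℕ) : ℝ) ((n + 1 : ℕ) : ℝ) (by positivity)
      (by push_cast; linarith)
    have e : ((n + 1 + 1 : ℕ) : ℝ) - ((n + 1 : ℕ) : ℝ) = 1 := by push_cast; ring
    rw [e, mul_one] at h
    have e2 : ((n : ℝ) + 1) * ((n + 1 : ℕ) : ℝ) ^ n = ((n + 1 : ℕ) : ℝ) ^ (n + 1) := by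
      push_cast; ring
    rw [e2] at h
    rw [Nat.factorial_succ (n + 1), pow_succ _ (n + 1)]
    calc (((n + 1 + 1) * (n + 1).factorial : ℕ) : ℝ) * 2 ^ (n + 1)
        = 2 * (((n + 1).factorial : ℝ) * 2 ^ n) * ((n + 1 + 1 : ℕ) : ℝ) := by
          push_cast; ring
      _ ≤ _ := by gcongr; linarith

/-- For every number field `F` of degree `d ≥ 2`, the class number satisfies
`h_F ≤ (2/π)^{r₂} √D_F (d - 1 + log D_F)^{d-1} / (d-1)!`, where `D_F` is the absolute
discriminant and `r₂` the number of pairs of complex embeddings. -/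
theorem stmt_9 (K : Type) [Field K] [NumberField K] (hd : 2 ≤ Module.finrank ℚ K) :
    (NumberField.classNumber K : ℝ)
      ≤ (2 / Real.pi) ^ (NumberField.InfinitePlace.nrComplexPlaces K) *
          Real.sqrt |(NumberField.discr K : ℝ)| *
          ((Module.finrank ℚ K : ℝ) - 1 + Real.log |(NumberField.discr K : ℝ)|) ^
            (Module.finrank ℚ K - 1) /
          (Nat.factorial (Module.finrank ℚ K - 1)) := by
  classical
  have hr : NumberField.InfinitePlace.nrComplexPlaces K ≤ Module.finrank ℚ K - 1 := by
    have := NumberField.InfinitePlace.card_add_two_mul_card_eq_rank K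
    omega
  obtain ⟨t, ht1, ht2⟩ := aux_tuple K
  have hI := fun C : ClassGroup (𝓞 K) => exists_ideal_in_class_of_norm_le C
  choose I hIC hIn using hI
  have hI0 : ∀ C, (I C : Ideal (𝓞 K)) ≠ ⊥ := fun C => nonZeroDivisors.coe_ne_zero (I C)
  generalize Module.finrank ℚ K = d at *
  obtain ⟨n, rfl⟩ : ∃ n, d = n + 1 := ⟨d - 1, by omega⟩
  rw [Nat.add_sub_cancel] at hr ⊢
  generalize NumberField.InfinitePlace.nrComplexPlaces K = r at *
  set M : ℝ := (2 / Real.pi) ^ r * Real.sqrt |(NumberField.discr K : ℝ)| with hM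
  have hD1 : (1 : ℝ) ≤ |(NumberField.discr K : ℝ)| := by
    have := Int.one_le_abs (NumberField.discr_ne_zero K)
    exact_mod_cast this
  have hb : ∀ C, (Ideal.absNorm (I C : Ideal (𝓞 K)) : ℝ) ≤ M := by
    intro C
    refine (hIn C).trans ?_
    have h1 : ((n + 1).factorial : ℝ) / ((n + 1 : ℕ) : ℝ) ^ (n + 1) ≤ (1 / 2) ^ r := by
      have h2 : ((n + 1).factorial : ℝ) / ((n + 1 : ℕ) : ℝ) ^ (n + 1) ≤ (1 / 2) ^ n := by
        rw [div_le_iff₀ (by positivity), one_div, inv_pow, ← div_eq_inv_mul,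
          le_div_iff₀ (by positivity)]
        exact aux_factorial n
      exact h2.trans (pow_le_pow_of_le_one (by norm_num) (by norm_num) hr)
    have e : (2 / Real.pi) ^ r = (4 / Real.pi) ^ r * (1 / 2) ^ r := by
      rw [← mul_pow]; congr 1; ring
    rw [hM, e, mul_assoc]
    have hpi := Real.pi_pos
    gcongr
  have hinj : Function.Injective fun C => t (I C : Ideal (𝓞 K)) := by
    intro C D h
    have h1 := ht2 _ _ (hI0 C) (hI0 D) h
    rw [← hIC C, ← hIC D, Subtype.ext h1]
  have hM1 : 1 ≤ M := by
    refine le_trans ?_ (hb 1)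
    have : Ideal.absNorm (I 1 : Ideal (𝓞 K)) ≠ 0 := by
      rw [Ne, Ideal.absNorm_eq_zero_iff]; exact hI0 1
    exact_mod_cast Nat.one_le_iff_ne_zero.mpr this
  have hc := aux_count n M hM1 (Finset.univ.image fun C => t (I C : Ideal (𝓞 K))) (by
    intro x hx
    rw [Finset.mem_image] at hx
    obtain ⟨C, -, rfl⟩ := hx
    obtain ⟨h1, h2⟩ := ht1 _ (hI0 C)
    refine ⟨h1, ?_⟩
    rw [h2]
    exact hb C)
  rw [Finset.card_image_of_injective _ hinj, Finset.card_univ] at hc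
  have hlog : Real.log M ≤ Real.log |(NumberField.discr K : ℝ)| := by
    refine Real.log_le_log (by linarith) ?_
    have h1 : (2 / Real.pi) ^ r ≤ 1 := by
      refine pow_le_one₀ (by positivity) ?_
      rw [div_le_one Real.pi_pos]
      linarith [Real.pi_gt_three]
    have h2 : Real.sqrt |(NumberField.discr K : ℝ)| ≤ |(NumberField.discr K : ℝ)| := by
      rw [Real.sqrt_le_left (by positivity)]
      nlinarith
    calc M ≤ 1 * Real.sqrt |(NumberField.discr K : ℝ)| := by rw [hM]; gcongr
      _ ≤ _ := by rw [one_mul]; exact h2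
  have hlM : 0 ≤ Real.log M := Real.log_nonneg hM1
  have hcn : (NumberField.classNumber K : ℝ) ≤ M * (n + Real.log M) ^ n / n.factorial := by
    rw [NumberField.classNumber]
    convert hc
  refine hcn.trans ?_
  push_cast
  rw [add_sub_cancel_right]
  gcongr
end

section
/- For every number field F of degree d, every ε > 0 and every integer k ≥ -1, the k-th Laurent coefficient λ_k^F of the Dedekind zeta function ζ_F at s = 1 (so that ζ_F(s) = λ_{-1}^F (s-1)^{-1} + λ_0^F + λ_1^F (s-1) + ⋯) satisfies |λ_k^F| ≪_{d,ε,k} D_F^ε. -/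
open NumberField

namespace Stmt12

section P1
variable (K : Type) [Field K] [NumberField K]

/-- The rational prime below an ideal. -/
noncomputable def rp (P : Ideal (𝓞 K)) : ℕ := Ideal.absNorm (Ideal.under ℤ P)

variable {K}

lemma rp_prime {P : Ideal (𝓞 K)} (hP : P.IsPrime) (h0 : P ≠ ⊥) : (rp K P).Prime := by
  haveI : NeZero P := ⟨h0⟩
  exact Nat.absNorm_under_prime P

lemma rp_span (P : Ideal (𝓞 K)) : Ideal.under ℤ P = Ideal.span {(rp K P : ℤ)} :=
  (Int.ideal_span_absNorm_eq_self _).symm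

lemma absNorm_prime {P : Ideal (𝓞 K)} (hP : P.IsPrime) (h0 : P ≠ ⊥) :
    ∃ f : ℕ, f ≠ 0 ∧ Ideal.absNorm P = rp K P ^ f := by
  haveI : P.LiesOver (Ideal.span {(rp K P : ℤ)}) := ⟨(rp_span P).symm⟩
  refine ⟨_, ?_, Ideal.absNorm_eq_pow_inertiaDeg' P (rp_prime hP h0)⟩
  intro h
  have h1 := Ideal.absNorm_eq_pow_inertiaDeg' P (rp_prime hP h0)
  rw [h, pow_zero, Ideal.absNorm_eq_one_iff] at h1
  exact hP.ne_top h1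

lemma exists_label (d : ℕ) (hd : Module.finrank ℚ K = d) :
    ∃ l : Ideal (𝓞 K) → Fin d, ∀ P Q : Ideal (𝓞 K), P.IsPrime → P ≠ ⊥ → Q.IsPrime → Q ≠ ⊥ →
      rp K P = rp K Q → l P = l Q → P = Q := by
  classical
  have hd0 : 0 < d := hd ▸ Module.finrank_pos
  have key : ∀ p : ℕ, ∃ e : Ideal (𝓞 K) → Fin d, p.Prime →
      Set.InjOn e {P | P.IsPrime ∧ Ideal.under ℤ P = Ideal.span {(p : ℤ)}} := by
    intro p
    by_cases hp : p.Prime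
    · have hb : Ideal.span {(p : ℤ)} ≠ ⊥ := by simpa using hp.ne_zero
      haveI : (Ideal.span {(p : ℤ)}).IsMaximal :=
        ((Ideal.span_singleton_prime (by exact_mod_cast hp.ne_zero)).2
          (Nat.prime_iff_prime_int.mp hp)).isMaximal hb
      have hc := Ideal.card_primesOverFinset_le_finrank (𝓞 K) ℚ K (p := Ideal.span {(p : ℤ)}) hb
      rw [hd] at hc
      set T := IsDedekindDomain.primesOverFinset (Ideal.span {(p : ℤ)}) (𝓞 K) with hT
      have : Nonempty (T ↪ Fin d) := by
        apply Function.Embedding.nonempty_of_card_le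
        simpa using hc
      obtain ⟨e⟩ := this
      refine ⟨fun P => if h : P ∈ T then e ⟨P, h⟩ else ⟨0, hd0⟩, fun _ P hP Q hQ h => ?_⟩
      have hPT : P ∈ T := (IsDedekindDomain.mem_primesOverFinset_iff hb _).2 ⟨hP.1, ⟨hP.2.symm⟩⟩
      have hQT : Q ∈ T := (IsDedekindDomain.mem_primesOverFinset_iff hb _).2 ⟨hQ.1, ⟨hQ.2.symm⟩⟩
      simp only [hPT, hQT, dif_pos] at h
      simpa using e.injective h
    · exact ⟨fun _ => ⟨0, hd0⟩, fun h => absurd h hp⟩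
  choose e he using key
  refine ⟨fun P => e (rp K P) P, fun P Q hP hP0 hQ hQ0 h hl => ?_⟩
  refine he (rp K P) (rp_prime hP hP0) ⟨hP, rp_span P⟩ ⟨hQ, ?_⟩ ?_
  · rw [h]; exact rp_span Q
  · simpa [h] using hl

lemma multiset_val (p : ℕ) (hp : p.Prime) (P : Ideal (𝓞 K)) (m : Multiset (Ideal (𝓞 K)))
    (f : ℕ) (hf : Ideal.absNorm P = p ^ f)
    (hm : ∀ Q ∈ m, Q.IsPrime ∧ Q ≠ ⊥ ∧ (rp K Q = p → Q = P)) [DecidableEq (Ideal (𝓞 K))] :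
    (m.map Ideal.absNorm).prod.factorization p = m.count P * f := by
  induction m using Multiset.induction_on with
  | empty => simp
  | cons Q m ih =>
    have hQ := hm Q (Multiset.mem_cons_self _ _)
    have ih := ih (fun R hR => hm R (Multiset.mem_cons_of_mem hR))
    obtain ⟨g, hg0, hg⟩ := absNorm_prime hQ.1 hQ.2.1
    have hne : (m.map Ideal.absNorm).prod ≠ 0 := by
      intro h
      rw [Multiset.prod_eq_zero_iff, Multiset.mem_map] at h
      obtain ⟨R, hR, hR0⟩ := h
      exact (hm R (Multiset.mem_cons_of_mem hR)).2.1 (Ideal.absNorm_eq_zero_iff.1 hR0)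
    have hne2 : Ideal.absNorm Q ≠ 0 := fun h => hQ.2.1 (Ideal.absNorm_eq_zero_iff.1 h)
    rw [Multiset.map_cons, Multiset.prod_cons, Nat.factorization_mul hne2 hne, Finsupp.add_apply,
      ih, Multiset.count_cons]
    by_cases h : rp K Q = p
    · have : Q = P := hQ.2.2 h
      subst this
      simp [hf, hp.factorization_self]
      ring
    · have : P ≠ Q := by
        rintro rfl
        rw [hf] at hg
        apply h
        have hq := rp_prime hQ.1 hQ.2.1
        have : rp K P ∣ p ^ f := hg ▸ dvd_pow_self _ hg0
        exact (Nat.prime_dvd_prime_iff_eq hq hp).1 (hq.dvd_of_dvd_pow this)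
      simp only [this, if_false, add_zero, hg]
      rw [Nat.factorization_pow]
      simp [Nat.factorization_eq_zero_of_not_dvd, h,
        (Nat.prime_dvd_prime_iff_eq hp (rp_prime hQ.1 hQ.2.1)), Ne.symm h]

open UniqueFactorizationMonoid in
lemma exists_tuple (d : ℕ) (hd : Module.finrank ℚ K = d) :
    ∃ n : {I : Ideal (𝓞 K) // I ≠ ⊥} → (Fin d → ℕ), Function.Injective n ∧
      ∀ I, ∏ i, n I i = Ideal.absNorm I.1 := by
  classical
  obtain ⟨l, hl⟩ := exists_label (K := K) d hd
  have hfac : ∀ I : Ideal (𝓞 K), ∀ P ∈ normalizedFactors I, P.IsPrime ∧ P ≠ ⊥ := by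
    intro I P hP
    have := prime_of_normalized_factor P hP
    exact ⟨Ideal.isPrime_of_prime this, this.ne_zero⟩
  refine ⟨fun I i => (((normalizedFactors I.1).filter (fun P => l P = i)).map
    Ideal.absNorm).prod, ?_, ?_⟩
  · rintro ⟨I, hI⟩ ⟨J, hJ⟩ h
    rw [Subtype.mk.injEq]
    rw [← Ideal.prod_normalizedFactors_eq_self hI, ← Ideal.prod_normalizedFactors_eq_self hJ]
    congr 1
    ext P
    by_cases hP : P.IsPrime ∧ P ≠ ⊥
    · obtain ⟨f, hf0, hf⟩ := absNorm_prime hP.1 hP.2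
      have h1 := congrFun h (l P)
      have hp := rp_prime hP.1 hP.2
      have hh : ∀ I : Ideal (𝓞 K), ((((normalizedFactors I).filter (fun Q => l Q = l P)).map
          Ideal.absNorm).prod).factorization (rp K P) = (normalizedFactors I).count P * f := by
        intro I
        rw [multiset_val (rp K P) hp P _ f hf, Multiset.count_filter, if_pos rfl]
        intro Q hQ
        rw [Multiset.mem_filter] at hQ
        exact ⟨(hfac I Q hQ.1).1, (hfac I Q hQ.1).2, fun h =>
          hl Q P (hfac I Q hQ.1).1 (hfac I Q hQ.1).2 hP.1 hP.2 h hQ.2⟩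
      have h2 := hh I
      have h3 := hh J
      simp only at h1
      rw [h1, h3] at h2
      exact (Nat.eq_of_mul_eq_mul_right (Nat.pos_of_ne_zero hf0) h2).symm
    · rw [Multiset.count_eq_zero_of_notMem, Multiset.count_eq_zero_of_notMem]
      · exact fun h => hP (hfac _ _ h)
      · exact fun h => hP (hfac _ _ h)
  · rintro ⟨I, hI⟩
    simp only
    have : ∀ m : Multiset (Ideal (𝓞 K)),
        ∏ i, ((m.filter (fun P => l P = i)).map Ideal.absNorm).prod =
        (m.map Ideal.absNorm).prod := by
      intro m
      induction m using Multiset.induction_on with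
      | empty => simp
      | cons Q m ih =>
        rw [Multiset.map_cons, Multiset.prod_cons, ← ih]
        have : ∀ i, (((Q ::ₘ m).filter (fun P => l P = i)).map Ideal.absNorm).prod =
          (if l Q = i then Ideal.absNorm Q else 1) *
            ((m.filter (fun P => l P = i)).map Ideal.absNorm).prod := by
          intro i
          split_ifs with h
          · rw [Multiset.filter_cons_of_pos (p := fun P => l P = i) m h]; simp
          · rw [Multiset.filter_cons_of_neg (p := fun P => l P = i) m h]; simp
        simp_rw [this, Finset.prod_mul_distrib]
        simp
    rw [this, ← map_multiset_prod, Ideal.prod_normalizedFactors_eq_self hI]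

lemma zeta_sum_le (d : ℕ) (hd : Module.finrank ℚ K = d) (σ : ℝ) (hσ : 1 < σ)
    (S : Finset {I : Ideal (𝓞 K) // I ≠ ⊥}) :
    ∑ I ∈ S, (Ideal.absNorm I.1 : ℝ) ^ (-σ) ≤ (∑' n : ℕ, (n : ℝ) ^ (-σ)) ^ d := by
  classical
  obtain ⟨n, hn, hp⟩ := exists_tuple (K := K) d hd
  obtain ⟨M, hM⟩ : ∃ M : ℕ, ∀ I ∈ S, ∀ i, n I i < M := by
    refine ⟨(S.sup fun I => Finset.univ.sup fun i => n I i) + 1, fun I hI i => ?_⟩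
    rw [Nat.lt_succ_iff]
    exact (Finset.le_sup (f := fun i => n I i) (Finset.mem_univ i)).trans
      (Finset.le_sup (f := fun I => Finset.univ.sup fun i => n I i) hI)
  have hs : Summable fun n : ℕ => (n : ℝ) ^ (-σ) := Real.summable_nat_rpow.2 (by linarith)
  calc ∑ I ∈ S, (Ideal.absNorm I.1 : ℝ) ^ (-σ)
      = ∑ I ∈ S, ∏ i, ((n I i : ℝ)) ^ (-σ) := by
        refine Finset.sum_congr rfl fun I _ => ?_
        rw [← hp I, Nat.cast_prod, Real.finsetProd_rpow]
        intro i _; positivity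
    _ = ∑ x ∈ S.image n, ∏ i, ((x i : ℝ)) ^ (-σ) := by
        rw [Finset.sum_image (fun a _ b _ h => hn h)]
    _ ≤ ∑ x ∈ Fintype.piFinset (fun _ : Fin d => Finset.range M), ∏ i, ((x i : ℝ)) ^ (-σ) := by
        refine Finset.sum_le_sum_of_subset_of_nonneg ?_ fun _ _ _ => by positivity
        intro x hx
        obtain ⟨I, hI, rfl⟩ := Finset.mem_image.1 hx
        simpa [Fintype.mem_piFinset] using hM I hI
    _ = (∑ n ∈ Finset.range M, (n : ℝ) ^ (-σ)) ^ d := by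
        rw [← Finset.prod_univ_sum (fun _ : Fin d => Finset.range M)
          (fun _ n => (n : ℝ) ^ (-σ))]
        simp
    _ ≤ _ := by
        gcongr
        exact hs.sum_le_tsum _ fun _ _ => by positivity

end P1
end Stmt12


namespace Stmt12

open Complex Complex.HadamardThreeLines in
lemma analytic_core (d m j : ℕ) (hd : 1 ≤ d) (hm : m ≤ d) (η : ℝ) (hη : 0 < η)
    (hη2 : η ≤ 1 / (4 * d)) (L M : ℝ) (hL : 1 ≤ L) (hM1 : 1 ≤ M) (R : ℂ) (H g zeta : ℂ → ℂ)
    (hH : DifferentiableOn ℂ H {s | 1 - 1 / (d : ℝ) < s.re})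
    (hb : ∀ s : ℂ, 1 - 1 / (2 * d : ℝ) ≤ s.re → ‖R‖ + ‖H s‖ ≤ L)
    (hz : ∀ s : ℂ, 1 < s.re → zeta s = s ^ m * (R / (s - 1) + H s))
    (hg : Differentiable ℂ g) (hgz : ∀ s : ℂ, 1 < s.re → g s = (s - 1) * zeta s)
    (hM : ∀ s : ℂ, s.re = 1 + η → ‖zeta s‖ ≤ M) :
    ‖iteratedDeriv j g 1‖ / (Nat.factorial j) ≤ 3 * 2 ^ d * (L ^ (4 * d * η) * M) / η ^ j := by
  have hd' : (1 : ℝ) ≤ d := by exact_mod_cast hd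
  have hd1 : 1 / (2 * d : ℝ) ≤ 1 / 2 := by
    rw [div_le_div_iff₀ (by positivity) (by positivity)]; linarith
  have hd2 : 1 / (2 * d : ℝ) < 1 / d := by
    rw [div_lt_div_iff₀ (by positivity) (by positivity)]; linarith
  have hη3 : η ≤ 1 / (2 * d : ℝ) / 2 := by
    refine hη2.trans (le_of_eq ?_); field_simp; norm_num
  set a : ℝ := 1 - 1 / (2 * d : ℝ) with ha
  set f : ℂ → ℂ := fun s => (R + (s - 1) * H s) / (s + 1) with hf
  have hU : IsOpen {s : ℂ | 1 - 1 / (d : ℝ) < s.re} :=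
    isOpen_lt continuous_const continuous_re
  have hs1 : ∀ s : ℂ, a ≤ s.re → 1 ≤ ‖s + 1‖ ∧ ‖s - 1‖ ≤ ‖s + 1‖ := by
    intro s hs
    have hre : 0 ≤ s.re := by linarith
    constructor
    · calc (1 : ℝ) ≤ |(s + 1).re| := by
            simp only [add_re, one_re]; rw [abs_of_nonneg (by linarith)]; linarith
        _ ≤ _ := abs_re_le_norm _
    · rw [← sq_le_sq₀ (norm_nonneg _) (norm_nonneg _), Complex.sq_norm, Complex.sq_norm,
        normSq_apply, normSq_apply]
      simp only [sub_re, sub_im, add_re, add_im, one_re, one_im]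
      nlinarith
  have hs1' : ∀ s : ℂ, a ≤ s.re → s + 1 ≠ 0 := by
    intro s hs h
    have := (hs1 s hs).1
    rw [h] at this; simp at this; linarith
  have hfb : ∀ s : ℂ, a ≤ s.re → ‖f s‖ ≤ L := by
    intro s hs
    obtain ⟨h1, h2⟩ := hs1 s hs
    rw [hf]; simp only [norm_div]
    rw [div_le_iff₀ (by linarith)]
    calc ‖R + (s - 1) * H s‖ ≤ ‖R‖ + ‖s - 1‖ * ‖H s‖ := (norm_add_le _ _).trans (by simp)
      _ ≤ ‖R‖ * ‖s + 1‖ + ‖s + 1‖ * ‖H s‖ := by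
          gcongr
          exact le_mul_of_one_le_right (norm_nonneg _) h1
      _ = (‖R‖ + ‖H s‖) * ‖s + 1‖ := by ring
      _ ≤ _ := by gcongr; exact hb s hs
  have hfd : ∀ s : ℂ, a ≤ s.re → DifferentiableAt ℂ f s := by
    intro s hs
    have h1 : DifferentiableAt ℂ H s := by
      refine hH.differentiableAt (hU.mem_nhds ?_)
      simp only [Set.mem_ofPred_eq]; linarith
    exact ((differentiableAt_const R).add ((differentiableAt_id.sub_const 1).mul h1)).div
      (differentiableAt_id.add_const 1) (hs1' s hs)
  have hright : ∀ s : ℂ, s.re = 1 + η → ‖f s‖ ≤ M := by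
    intro s hs
    have hsa : a ≤ s.re := by linarith [show 0 < 1 / (2 * d : ℝ) by positivity]
    obtain ⟨h1, h2⟩ := hs1 s hsa
    have hsn : 1 ≤ ‖s‖ := by
      calc (1 : ℝ) ≤ |s.re| := by rw [hs, abs_of_nonneg (by linarith)]; linarith
        _ ≤ _ := abs_re_le_norm _
    have hs0 : s ≠ 0 := by rintro rfl; simp at hsn; linarith
    have hsm1 : s - 1 ≠ 0 := by
      intro h
      have : (s - 1).re = 0 := by rw [h]; rfl
      simp [hs] at this; linarith
    have : f s = (s - 1) / (s + 1) * (zeta s / s ^ m) := by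
      have h3 := hs1' s hsa
      rw [hz s (by linarith), hf]
      field_simp
    rw [this, norm_mul, norm_div, norm_div, norm_pow]
    calc ‖s - 1‖ / ‖s + 1‖ * (‖zeta s‖ / ‖s‖ ^ m) ≤ 1 * ‖zeta s‖ := by
          gcongr
          · rw [div_le_one (by linarith)]; exact h2
          · exact div_le_self (norm_nonneg _) (one_le_pow₀ hsn)
      _ ≤ M := by rw [one_mul]; exact hM s hs
  have hab : a < 1 + η := by linarith [show 0 < 1 / (2 * d : ℝ) by positivity]
  have hinterp : ∀ s : ℂ, 1 - η ≤ s.re → s.re ≤ 1 + η → ‖f s‖ ≤ L ^ (4 * d * η) * M := by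
    intro s h1 h2
    have hmem : s ∈ verticalClosedStrip a (1 + η) := ⟨by linarith, h2⟩
    have := norm_le_interp_of_mem_verticalClosedStrip' (f := f) hab hmem ?_ ?_
      (a := L) (b := M) ?_ ?_
    · refine this.trans ?_
      have ht : (s.re - a) / (1 + η - a) ≤ 1 := by
        rw [div_le_one (by linarith)]; linarith
      have ht2 : 1 - (s.re - a) / (1 + η - a) ≤ 4 * d * η := by
        have hba : 1 / (2 * d : ℝ) ≤ 1 + η - a := by linarith
        have hpos : 0 < 1 + η - a := by linarith
        rw [one_sub_div hpos.ne', div_le_iff₀ hpos]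
        have : 4 * d * η * (1 / (2 * d : ℝ)) ≤ 4 * d * η * (1 + η - a) := by gcongr
        have h4 : 4 * d * η * (1 / (2 * d : ℝ)) = 2 * η := by field_simp; norm_num
        linarith
      gcongr
      calc M ^ ((s.re - a) / (1 + η - a)) ≤ M ^ (1 : ℝ) := by gcongr
        _ = M := Real.rpow_one M
    · apply DifferentiableOn.diffContOnCl
      intro z hz
      have hcl : closure (verticalStrip a (1 + η)) ⊆ verticalClosedStrip a (1 + η) := by
        apply closure_minimal
        · intro z hz; exact ⟨hz.1.le, hz.2.le⟩
        · exact isClosed_Icc.preimage continuous_re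
      exact (hfd z (hcl hz).1).differentiableWithinAt
    · refine ⟨L, ?_⟩
      rintro _ ⟨z, hz, rfl⟩
      exact hfb z hz.1
    · intro z hz
      exact hfb z (le_of_eq hz.symm)
    · intro z hz
      exact hright z hz
  have heq : Set.EqOn g (fun s => s ^ m * (R + (s - 1) * H s)) {s | 1 - 1 / (d : ℝ) < s.re} := by
    refine AnalyticOnNhd.eqOn_of_preconnected_of_eventuallyEq (𝕜 := ℂ) (z₀ := 2) ?_ ?_ ?_ ?_ ?_
    · exact (hg.differentiableOn).analyticOnNhd hU
    · refine DifferentiableOn.analyticOnNhd ?_ hU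
      exact (differentiable_pow m).differentiableOn.mul ((differentiableOn_const R).add
        (((differentiable_id.sub_const 1).differentiableOn).mul hH))
    · exact (convex_halfSpace_re_gt _).isPreconnected
    · simp only [Set.mem_ofPred_eq]
      have : (0 : ℝ) < 1 / d := by positivity
      have h2 : (2 : ℂ).re = 2 := rfl
      rw [h2]; linarith
    · have : {s : ℂ | 1 < s.re} ∈ nhds (2 : ℂ) :=
        (isOpen_lt continuous_const continuous_re).mem_nhds (by simp)
      filter_upwards [this] with s hs
      have hsm1 : s - 1 ≠ 0 := by
        intro h
        have h2 : (s - 1).re = 0 := by rw [h]; rfl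
        simp at h2; linarith
      rw [hgz s hs, hz s hs]
      field_simp
  have hfinal : ∀ z ∈ Metric.sphere (1 : ℂ) η, ‖g z‖ ≤ 3 * 2 ^ d * (L ^ (4 * d * η) * M) := by
    intro z hz
    have hzn : ‖z - 1‖ = η := by simpa [dist_eq_norm] using hz
    have hzr : |z.re - 1| ≤ η := by
      have := abs_re_le_norm (z - 1)
      rw [hzn] at this; simpa using this
    rw [abs_le] at hzr
    have hη1 : η ≤ 1 := by linarith
    have hz2 : ‖z‖ ≤ 2 := by
      calc ‖z‖ = ‖(z - 1) + 1‖ := by ring_nf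
        _ ≤ ‖z - 1‖ + ‖(1 : ℂ)‖ := norm_add_le _ _
        _ ≤ 2 := by rw [hzn, norm_one]; linarith
    have hz3 : ‖z + 1‖ ≤ 3 := by
      calc ‖z + 1‖ ≤ ‖z‖ + ‖(1 : ℂ)‖ := norm_add_le _ _
        _ ≤ 3 := by rw [norm_one]; linarith
    have hza : a ≤ z.re := by linarith
    rw [heq (show z ∈ {s : ℂ | 1 - 1 / (d : ℝ) < s.re} by
      simp only [Set.mem_ofPred_eq]; linarith)]
    have : z ^ m * (R + (z - 1) * H z) = (z + 1) * z ^ m * f z := by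
      have := hs1' z hza
      rw [hf]; field_simp
    simp only
    rw [this, norm_mul, norm_mul, norm_pow]
    have hzm : ‖z‖ ^ m ≤ 2 ^ d := by
      calc ‖z‖ ^ m ≤ 2 ^ m := by gcongr
        _ ≤ 2 ^ d := pow_le_pow_right₀ (by norm_num) hm
    gcongr
    exact hinterp z (by linarith) (by linarith)
  have := norm_iteratedDeriv_le_of_forall_mem_sphere_norm_le j hη
    (hg.diffContOnCl (s := Metric.ball 1 η)) hfinal
  rw [div_le_iff₀ (by positivity)]
  refine this.trans (le_of_eq ?_)
  ring

end Stmt12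

open NumberField

namespace Stmt12

section P3
open NumberField.mixedEmbedding NumberField.InfinitePlace MeasureTheory Module
open scoped Classical ENNReal NNReal
variable {K : Type} [Field K] [NumberField K]

/-- The mixed space. -/
abbrev Vm (K : Type) [Field K] := mixedSpace K

lemma nap_ne (x : Vm K) (hx : mixedEmbedding.norm x ≠ 0) (w : InfinitePlace K) :
    0 < normAtPlace w x := by
  rw [mixedEmbedding.norm_apply, Finset.prod_ne_zero_iff] at hx
  have := hx w (Finset.mem_univ w)
  exact lt_of_le_of_ne (normAtPlace_nonneg w x) (fun h => this (by
    rw [← h, zero_pow (by simp [mult_ne_zero])]))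

lemma mul_inv_eq (x : Vm K) (hx : mixedEmbedding.norm x ≠ 0) : x * x⁻¹ = 1 := by
  ext w
  · have := nap_ne x hx w.1
    rw [normAtPlace_apply_of_isReal w.2] at this
    simp only [Prod.fst_mul, Prod.fst_inv, Pi.mul_apply, Pi.inv_apply, Prod.fst_one, Pi.one_apply]
    exact mul_inv_cancel₀ (norm_pos_iff.mp this)
  · have := nap_ne x hx w.1
    rw [normAtPlace_apply_of_isComplex w.2] at this
    simp only [Prod.snd_mul, Prod.snd_inv, Pi.mul_apply, Pi.inv_apply, Prod.snd_one, Pi.one_apply]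
    rw [mul_inv_cancel₀ (norm_pos_iff.mp this)]

lemma mem_convexBodyLT_iff (f : InfinitePlace K → ℝ≥0) (x : Vm K) :
    x ∈ convexBodyLT K f ↔ ∀ w, normAtPlace w x < f w := by
  simp only [convexBodyLT, Set.mem_prod, Set.mem_pi, Set.mem_univ, mem_ball_zero_iff,
    forall_true_left]
  constructor
  · rintro ⟨h1, h2⟩ w
    rcases isReal_or_isComplex w with h | h
    · rw [normAtPlace_apply_of_isReal h]; exact h1 ⟨w, h⟩
    · rw [normAtPlace_apply_of_isComplex h]; exact h2 ⟨w, h⟩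
  · intro h
    refine ⟨fun w => ?_, fun w => ?_⟩
    · have := h w; rwa [normAtPlace_apply_of_isReal w.2] at this
    · have := h w; rwa [normAtPlace_apply_of_isComplex w.2] at this

lemma norm_le_iff_nap (x : Vm K) (r : ℝ) : ‖x‖ ≤ r ↔ ∀ w, normAtPlace w x ≤ r := by
  rw [norm_eq_sup'_normAtPlace]
  simp

lemma norm_lt_iff_nap (x : Vm K) (r : ℝ) : ‖x‖ < r ↔ ∀ w, normAtPlace w x < r := by
  rw [norm_eq_sup'_normAtPlace]
  simp

/-- the volume of the unit ball -/
noncomputable abbrev vB (K : Type) [Field K] [NumberField K] : ℝ≥0 := convexBodyLTFactor K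

lemma vB_le (K : Type) [Field K] [NumberField K] : (vB K : ℝ) ≤ 4 ^ finrank ℚ K := by
  rw [← card_add_two_mul_card_eq_rank, pow_add, pow_mul]
  simp only [vB, convexBodyLTFactor, NNReal.coe_mul, NNReal.coe_pow, NNReal.coe_ofNat,
    NNReal.coe_real_pi]
  have := Real.pi_le_four
  gcongr <;> norm_num
  linarith

lemma ball_eq (r : ℝ≥0) : Metric.ball (0 : Vm K) r = convexBodyLT K (fun _ => r) := by
  ext x
  rw [mem_convexBodyLT_iff, mem_ball_zero_iff, norm_lt_iff_nap]

lemma vol_ball : volume (Metric.ball (0 : Vm K) 1) = vB K := by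
  have := ball_eq (K := K) 1
  rw [NNReal.coe_one] at this
  rw [this, convexBodyLT_volume]; simp

lemma vol_closedBall : volume (Metric.closedBall (0 : Vm K) 1) = vB K := by
  rw [Measure.addHaar_closedBall_eq_addHaar_ball, vol_ball]

lemma abs_det_mul (x : Vm K) (hx : mixedEmbedding.norm x ≠ 0) :
    |LinearMap.det (LinearMap.mulLeft ℝ x)| = mixedEmbedding.norm x := by
  have h := Measure.addHaar_image_linearMap (volume : Measure (Vm K)) (LinearMap.mulLeft ℝ x)
    (Metric.ball 0 1)
  have him : (LinearMap.mulLeft ℝ x) '' (Metric.ball 0 1) =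
      convexBodyLT K (fun w => (normAtPlace w x).toNNReal) := by
    ext y
    rw [mem_convexBodyLT_iff]
    constructor
    · rintro ⟨z, hz, rfl⟩ w
      rw [mem_ball_zero_iff, norm_lt_iff_nap] at hz
      have := nap_ne x hx w
      simpa [Real.coe_toNNReal _ this.le] using (mul_lt_mul_of_pos_left (hz w) this)
    · intro h
      refine ⟨x⁻¹ * y, ?_, ?_⟩
      · rw [mem_ball_zero_iff, norm_lt_iff_nap]
        intro w
        have h0 := nap_ne x hx w
        have h1 : normAtPlace w x * normAtPlace w (x⁻¹ * y) = normAtPlace w y := by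
          rw [← map_mul, ← mul_assoc, mul_inv_eq x hx, one_mul]
        have h2 := h w
        rw [Real.coe_toNNReal _ h0.le] at h2
        by_contra h3
        push Not at h3
        nlinarith
      · rw [LinearMap.mulLeft_apply, ← mul_assoc, mul_inv_eq x hx, one_mul]
  rw [him, vol_ball, convexBodyLT_volume, mul_comm] at h
  have h0 : (vB K : ℝ≥0∞) ≠ 0 := by exact_mod_cast convexBodyLTFactor_ne_zero K
  rw [ENNReal.mul_left_inj h0 ENNReal.coe_ne_top] at h
  rw [mixedEmbedding.norm_apply]
  have h2 := congrArg ENNReal.toReal h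
  rw [ENNReal.toReal_ofReal (abs_nonneg _)] at h2
  rw [← h2]
  simp [ENNReal.toReal_prod, Real.coe_toNNReal _ (normAtPlace_nonneg _ x)]

lemma lintegral_mul_left (x : Vm K) (hx : mixedEmbedding.norm x ≠ 0) (φ : Vm K → ℝ≥0∞)
    (hφ : Measurable φ) :
    ∫⁻ y, φ (x * y) = (ENNReal.ofReal (mixedEmbedding.norm x))⁻¹ * ∫⁻ y, φ y := by
  have hdet : LinearMap.det (LinearMap.mulLeft ℝ x) ≠ 0 := by
    rw [← abs_ne_zero, abs_det_mul x hx]; exact hx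
  have h := Measure.map_linearMap_addHaar_eq_smul_addHaar (volume : Measure (Vm K)) hdet
  have hm : Measurable (LinearMap.mulLeft ℝ x) :=
    (LinearMap.continuous_of_finiteDimensional _).measurable
  have h2 := lintegral_map (μ := volume) hφ hm
  rw [h, lintegral_smul_measure] at h2
  simp only [LinearMap.mulLeft_apply] at h2
  rw [← h2, abs_inv, abs_det_mul x hx, ENNReal.ofReal_inv_of_pos]
  · rfl
  · exact lt_of_le_of_ne (mixedEmbedding.norm_nonneg x) hx.symm

lemma vol_mul_preimage (x : Vm K) (hx : mixedEmbedding.norm x ≠ 0) (S : Set (Vm K))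
    (hS : MeasurableSet S) :
    volume {y | x * y ∈ S} = (ENNReal.ofReal (mixedEmbedding.norm x))⁻¹ * volume S := by
  have h := lintegral_mul_left x hx (S.indicator 1) (measurable_one.indicator hS)
  rw [lintegral_indicator_one hS] at h
  rw [← h, ← lintegral_indicator_one]
  · rfl
  · exact (measurable_const_mul x) hS

end P3
end Stmt12

open NumberField

namespace Stmt12

section P4
open NumberField.mixedEmbedding NumberField.InfinitePlace MeasureTheory Module
open scoped Classical ENNReal NNReal nonZeroDivisors IntermediateField
variable {K : Type} [Field K] [NumberField K]

/-- absolute discriminant -/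
noncomputable def Dk (K : Type) [Field K] [NumberField K] : ℝ := |(discr K : ℝ)|

/-- covolume of the ring of integers -/
noncomputable def qK (K : Type) [Field K] [NumberField K] : ℝ :=
  (2 : ℝ)⁻¹ ^ nrComplexPlaces K * Real.sqrt (Dk K)

/-- embedding of integers -/
noncomputable abbrev mE (a : 𝓞 K) : Vm K := mixedEmbedding K (a : K)

lemma one_le_Dk (K : Type) [Field K] [NumberField K] : 1 ≤ Dk K := by
  unfold Dk
  have := Int.one_le_abs (discr_ne_zero K)
  exact_mod_cast this

lemma qK_pos (K : Type) [Field K] [NumberField K] : 0 < qK K := by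
  unfold qK
  have := one_le_Dk K
  positivity

lemma qK_le (K : Type) [Field K] [NumberField K] : qK K ≤ Dk K := by
  unfold qK
  have h := one_le_Dk K
  have h1 : Real.sqrt (Dk K) ≤ Dk K := by
    rw [Real.sqrt_le_left (by linarith)]; nlinarith
  have h2 : (2 : ℝ)⁻¹ ^ nrComplexPlaces K ≤ 1 := pow_le_one₀ (by norm_num) (by norm_num)
  calc _ ≤ 1 * Real.sqrt (Dk K) := by gcongr
    _ ≤ Dk K := by linarith

lemma qK_inv_le (K : Type) [Field K] [NumberField K] : (qK K)⁻¹ ≤ 2 ^ finrank ℚ K := by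
  unfold qK
  have h := one_le_Dk K
  have h1 : 1 ≤ Real.sqrt (Dk K) := by rwa [Real.one_le_sqrt]
  rw [mul_inv, inv_pow, inv_inv]
  calc _ ≤ (2 : ℝ) ^ nrComplexPlaces K * 1 := by
        gcongr; exact inv_le_one_of_one_le₀ h1
    _ ≤ _ := by
        rw [mul_one, ← card_add_two_mul_card_eq_rank]
        gcongr
        · norm_num
        · omega

lemma vol_fd (K : Type) [Field K] [NumberField K] :
    volume (ZSpan.fundamentalDomain (latticeBasis K)) = ENNReal.ofReal (qK K) := by
  rw [volume_fundamentalDomain_latticeBasis, qK, ENNReal.ofReal_mul (by positivity),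
    ENNReal.ofReal_pow (by norm_num), ENNReal.ofReal_inv_of_pos (by norm_num)]
  congr 1
  · simp
  · rw [← ENNReal.ofReal_coe_nnreal]
    congr 1
    rw [Real.coe_sqrt]
    simp [Dk, Int.norm_eq_abs]

/-- an integral ideal as an invertible fractional ideal -/
noncomputable abbrev fI (J : (Ideal (𝓞 K))⁰) : (FractionalIdeal (𝓞 K)⁰ K)ˣ :=
  FractionalIdeal.mk0 K J

/-- norm of an ideal as a real number -/
noncomputable abbrev nI (J : (Ideal (𝓞 K))⁰) : ℝ := (Ideal.absNorm (J : Ideal (𝓞 K)) : ℝ)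

lemma one_le_nI (J : (Ideal (𝓞 K))⁰) : 1 ≤ nI J := by
  have : Ideal.absNorm (J : Ideal (𝓞 K)) ≠ 0 := by
    rw [Ideal.absNorm_ne_zero_iff_mem_nonZeroDivisors]; exact J.2
  exact_mod_cast Nat.one_le_iff_ne_zero.mpr this

lemma vol_fd_ideal (J : (Ideal (𝓞 K))⁰) :
    volume (ZSpan.fundamentalDomain (fractionalIdealLatticeBasis K (fI J))) =
      ENNReal.ofReal (nI J * qK K) := by
  rw [volume_fundamentalDomain_fractionalIdealLatticeBasis, vol_fd,
    ENNReal.ofReal_mul (by positivity)]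
  simp [FractionalIdeal.coeIdeal_absNorm]

lemma minkowskiBound_eq (J : (Ideal (𝓞 K))⁰) :
    minkowskiBound K (fI J) = ENNReal.ofReal (nI J * qK K * 2 ^ finrank ℚ K) := by
  rw [minkowskiBound, vol_fd_ideal, ENNReal.ofReal_mul (p := nI J * qK K)
    (by have := qK_pos K; positivity), mixedEmbedding.finrank]
  simp [ENNReal.ofReal_pow]

lemma norm_mE_le (a : 𝓞 K) (r : ℝ) (h : ∀ w : InfinitePlace K, w a ≤ r) : ‖mE a‖ ≤ r := by
  rw [norm_le_iff_nap]
  intro w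
  rw [normAtPlace_apply]; exact h w

lemma exists_theta (K : Type) [Field K] [NumberField K] :
    ∃ θ : 𝓞 K, ℚ⟮(θ : K)⟯ = ⊤ ∧ ‖mE θ‖ ≤ 2 ^ finrank ℚ K * Dk K + 2 := by
  have hD := one_le_Dk K
  set B : ℝ≥0 := (2 ^ finrank ℚ K * Dk K + 1).toNNReal with hB
  have hBr : (B : ℝ) = 2 ^ finrank ℚ K * Dk K + 1 := Real.coe_toNNReal _ (by positivity)
  have hm : minkowskiBound K ↑1 < (B : ℝ≥0∞) := by
    have h1 := minkowskiBound_eq (K := K) 1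
    have h2 : fI (1 : (Ideal (𝓞 K))⁰) = 1 := map_one _
    rw [h2] at h1
    rw [h1, ← ENNReal.ofReal_coe_nnreal, hBr, ENNReal.ofReal_lt_ofReal_iff (by positivity)]
    have := qK_le K
    simp only [nI, OneMemClass.coe_one, Ideal.one_eq_top, Ideal.absNorm_top, Nat.cast_one, one_mul]
    have h3 : qK K * 2 ^ finrank ℚ K ≤ Dk K * 2 ^ finrank ℚ K := by gcongr
    linarith
  have hBp : 0 ≤ 2 ^ finrank ℚ K * Dk K := by positivity
  obtain ⟨w₀⟩ : Nonempty (InfinitePlace K) := inferInstance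
  rcases isReal_or_isComplex w₀ with h | h
  · obtain ⟨θ, h1, h2⟩ := exists_primitive_element_lt_of_isReal K h (B := B)
      (hm.trans_le (le_mul_of_one_le_left (by simp) (by
        exact_mod_cast one_le_convexBodyLTFactor K)))
    refine ⟨θ, h1, norm_mE_le _ _ fun w => ?_⟩
    have := (h2 w).le
    push_cast at this
    refine this.trans (max_le ?_ ?_) <;> linarith
  · obtain ⟨θ, h1, h2⟩ := exists_primitive_element_lt_of_isComplex K h (B := B)
      (hm.trans_le (le_mul_of_one_le_left (by simp) (by
        exact_mod_cast one_le_convexBodyLT'Factor K)))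
    refine ⟨θ, h1, norm_mE_le _ _ fun w => ?_⟩
    refine (h2 w).le.trans ?_
    rw [Real.sqrt_le_left (by positivity), hBr]
    nlinarith

lemma exists_coeffs (θ : 𝓞 K) (hθ : ℚ⟮(θ : K)⟯ = ⊤) (v : Vm K) :
    ∃ c : Fin (finrank ℚ K) → ℝ, v = ∑ i, c i • mE θ ^ (i : ℕ) := by
  have hIntg : IsIntegral ℚ (θ : K) := Algebra.IsIntegral.isIntegral _
  have hadj : Algebra.adjoin ℚ {(θ : K)} = ⊤ := by
    rw [← IntermediateField.adjoin_simple_toSubalgebra_of_isAlgebraic hIntg.isAlgebraic, hθ]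
    rfl
  set pb := PowerBasis.ofAdjoinEqTop hIntg hadj with hpb
  have hdim : finrank ℚ K = pb.dim := pb.finrank
  have hgen : pb.gen = (θ : K) := PowerBasis.ofAdjoinEqTop_gen hIntg hadj
  have hK : ∀ k : K, mixedEmbedding K k ∈
      Submodule.span ℝ (Set.range fun i : Fin (finrank ℚ K) => mE θ ^ (i : ℕ)) := by
    intro k
    rw [← pb.basis.sum_repr k, map_sum]
    refine Submodule.sum_mem _ fun i _ => ?_
    rw [pb.basis_eq_pow, hgen, map_rat_smul, map_pow, ← Rat.cast_smul_eq_qsmul ℝ]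
    refine Submodule.smul_mem _ _ (Submodule.subset_span ⟨⟨i, by rw [hdim]; exact i.2⟩, rfl⟩)
  have hv : v ∈ Submodule.span ℝ (Set.range fun i : Fin (finrank ℚ K) => mE θ ^ (i : ℕ)) := by
    have h1 : v ∈ Submodule.span ℝ (Set.range (latticeBasis K)) := by
      rw [(latticeBasis K).span_eq]; trivial
    refine Submodule.span_le.mpr ?_ h1
    rintro _ ⟨i, rfl⟩
    rw [latticeBasis_apply]
    exact hK _
  rw [Submodule.mem_span_range_iff_exists_fun] at hv
  obtain ⟨c, hc⟩ := hv
  exact ⟨c, hc.symm⟩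

/-- Minkowski: a short nonzero element in a twisted ideal lattice. -/
lemma exists_short (J : (Ideal (𝓞 K))⁰) (x : Vm K) (hx : mixedEmbedding.norm x ≠ 0) :
    ∃ a ∈ (J : Ideal (𝓞 K)), a ≠ 0 ∧
      ‖x * mE a‖ ≤ 4 * Dk K * (mixedEmbedding.norm x * nI J) ^ (1 / (finrank ℚ K : ℝ)) := by
  have hD := one_le_Dk K
  have hd : 0 < finrank ℚ K := finrank_pos
  have hnx : 0 < mixedEmbedding.norm x := lt_of_le_of_ne (mixedEmbedding.norm_nonneg x) hx.symm
  have hJ := one_le_nI J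
  set n := mixedEmbedding.norm x * nI J with hn
  have hn0 : 0 < n := by positivity
  set R := 4 * Dk K * n ^ (1 / (finrank ℚ K : ℝ)) with hR
  have hR0 : 0 < R := by positivity
  have hRd : R ^ finrank ℚ K = (4 * Dk K) ^ finrank ℚ K * n := by
    rw [hR, mul_pow, ← Real.rpow_natCast (n ^ _), ← Real.rpow_mul hn0.le, one_div,
      inv_mul_cancel₀ (by positivity), Real.rpow_one]
  set f : InfinitePlace K → ℝ≥0 := fun w => (R / normAtPlace w x).toNNReal with hf
  have hfr : ∀ w, (f w : ℝ) = R / normAtPlace w x := fun w =>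
    Real.coe_toNNReal _ (div_nonneg hR0.le (normAtPlace_nonneg _ _))
  have hvol : volume (convexBodyLT K f) =
      ENNReal.ofReal (vB K * (R ^ finrank ℚ K / mixedEmbedding.norm x)) := by
    rw [convexBodyLT_volume]
    have h1 : (∏ w, (f w : ℝ) ^ mult w) = R ^ finrank ℚ K / mixedEmbedding.norm x := by
      simp_rw [hfr, div_pow]
      rw [Finset.prod_div_distrib, Finset.prod_pow_eq_pow_sum, sum_mult_eq,
        mixedEmbedding.norm_apply]
    rw [← h1, ENNReal.ofReal_mul (by positivity), ENNReal.ofReal_coe_nnreal,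
      ENNReal.ofReal_prod_of_nonneg (fun _ _ => by positivity)]
    simp [ENNReal.ofReal_pow]
  have hmk : minkowskiBound K (fI J) < volume (convexBodyLT K f) := by
    have hv1 : (1 : ℝ) ≤ vB K := by exact_mod_cast one_le_convexBodyLTFactor K
    rw [hvol, minkowskiBound_eq, ENNReal.ofReal_lt_ofReal_iff (by positivity), hRd, hn]
    have e : (4 * Dk K) ^ finrank ℚ K * (mixedEmbedding.norm x * nI J) / mixedEmbedding.norm x
      = (4 * Dk K) ^ finrank ℚ K * nI J := by field_simp
    rw [e]
    have h1 : qK K * 2 ^ finrank ℚ K < (4 * Dk K) ^ finrank ℚ K := by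
      rw [mul_pow, mul_comm]
      have h2 : (2 : ℝ) ^ finrank ℚ K < 4 ^ finrank ℚ K :=
        pow_lt_pow_left₀ (by norm_num) (by norm_num) hd.ne'
      have h3 : qK K ≤ Dk K ^ finrank ℚ K := (qK_le K).trans (le_self_pow₀ hD hd.ne')
      have := qK_pos K
      exact mul_lt_mul h2 h3 this (by positivity)
    calc nI J * qK K * 2 ^ finrank ℚ K = 1 * ((qK K * 2 ^ finrank ℚ K) * nI J) := by ring
      _ < 1 * ((4 * Dk K) ^ finrank ℚ K * nI J) := by gcongr
      _ ≤ _ := by gcongr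
  obtain ⟨a, haJ, ha0, hlt⟩ := exists_ne_zero_mem_ideal_lt K (fI J) hmk
  rw [FractionalIdeal.coe_mk0] at haJ
  obtain ⟨a', ha', rfl⟩ := (FractionalIdeal.mem_coeIdeal _).mp haJ
  refine ⟨a', ha', ?_, ?_⟩
  · rintro rfl; simp at ha0
  · rw [norm_le_iff_nap]
    intro w
    have h1 := nap_ne x hx w
    have h2 := hlt w
    rw [hfr, lt_div_iff₀ h1] at h2
    rw [map_mul, normAtPlace_apply]
    rw [mul_comm]; exact h2.le

/-- covering constant -/
noncomputable def rho0 (K : Type) [Field K] [NumberField K] : ℝ :=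
  4 * Dk K * (finrank ℚ K * (2 ^ finrank ℚ K * Dk K + 2) ^ finrank ℚ K)

lemma covering (J : (Ideal (𝓞 K))⁰) (x : Vm K) (hx : mixedEmbedding.norm x ≠ 0) (v : Vm K) :
    ∃ a ∈ (J : Ideal (𝓞 K)),
      ‖x * (v - mE a)‖ ≤ rho0 K * (mixedEmbedding.norm x * nI J) ^ (1 / (finrank ℚ K : ℝ)) := by
  have hD := one_le_Dk K
  obtain ⟨a0, ha0, hne, hs⟩ := exists_short J x hx
  obtain ⟨θ, hθ, hT⟩ := exists_theta K
  obtain ⟨c, hc⟩ := exists_coeffs θ hθ (mixedEmbedding K ((a0 : K)⁻¹) * v)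
  set T := 2 ^ finrank ℚ K * Dk K + 2 with hTdef
  have hT1 : 1 ≤ T := by have : 0 ≤ 2 ^ finrank ℚ K * Dk K := by positivity
                         linarith
  set S := 4 * Dk K * (mixedEmbedding.norm x * nI J) ^ (1 / (finrank ℚ K : ℝ)) with hS
  refine ⟨a0 * ∑ i, (round (c i) : 𝓞 K) * θ ^ (i : ℕ), Ideal.mul_mem_right _ _ ha0, ?_⟩
  have hv : v = mE a0 * ∑ i, c i • mE θ ^ (i : ℕ) := by
    rw [← hc, ← mul_assoc, ← map_mul, mul_inv_cancel₀, map_one, one_mul]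
    simpa using hne
  have e : x * (v - mE (a0 * ∑ i, (round (c i) : 𝓞 K) * θ ^ (i : ℕ))) =
      (x * mE a0) * ∑ i, (c i - round (c i)) • mE θ ^ (i : ℕ) := by
    conv_lhs => rw [hv]
    have : mE (a0 * ∑ i, (round (c i) : 𝓞 K) * θ ^ (i : ℕ)) =
      mE a0 * ∑ i, ((round (c i) : ℤ) : ℝ) • mE θ ^ (i : ℕ) := by
      simp only [mE, map_mul, map_sum, map_pow, map_intCast]
      congr 1
    rw [this, ← mul_sub, ← Finset.sum_sub_distrib, mul_assoc]
    simp only [sub_smul]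
  rw [e]
  have hsum : ‖∑ i, (c i - round (c i)) • mE θ ^ (i : ℕ)‖ ≤ finrank ℚ K * T ^ finrank ℚ K := by
    calc _ ≤ ∑ i : Fin (finrank ℚ K), T ^ finrank ℚ K := by
          refine norm_sum_le_of_le _ fun i _ => ?_
          rw [_root_.norm_smul]
          have h1 : ‖c i - round (c i)‖ ≤ 1 := (abs_sub_round (c i)).trans (by norm_num)
          have h2 : ‖mE θ ^ (i : ℕ)‖ ≤ T ^ finrank ℚ K := by
            calc _ ≤ ‖mE θ‖ ^ (i : ℕ) := norm_pow_le _ _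
              _ ≤ T ^ (i : ℕ) := by gcongr
              _ ≤ _ := pow_le_pow_right₀ hT1 i.2.le
          calc _ ≤ 1 * T ^ finrank ℚ K := by gcongr
            _ = _ := one_mul _
      _ = _ := by simp
  have hS0 : 0 ≤ S := (_root_.norm_nonneg _).trans hs
  calc _ ≤ ‖x * mE a0‖ * ‖∑ i, (c i - round (c i)) • mE θ ^ (i : ℕ)‖ := norm_mul_le _ _
    _ ≤ S * (finrank ℚ K * T ^ finrank ℚ K) := by gcongr
    _ = _ := by rw [hS, rho0]; ring

end P4
end Stmt12

open NumberField

namespace Stmt12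

section P5
open NumberField.mixedEmbedding NumberField.InfinitePlace MeasureTheory Module
open scoped Classical ENNReal NNReal nonZeroDivisors IntermediateField
variable {K : Type} [Field K] [NumberField K]

lemma tsum_shift_le {E : Type*} [AddCommGroup E] (L : AddSubgroup E) (S S' : Set E) (x : E)
    (g0 : L) (h : ∀ g : L, (g : E) + x ∈ S → (g : E) + g0 ∈ S') :
    ∑' g : L, S.indicator (1 : E → ℝ≥0∞) ((g : E) + x) ≤
      ∑' g : L, S'.indicator (1 : E → ℝ≥0∞) (g : E) := by
  rw [← (Equiv.addRight g0).tsum_eq (fun g : L => S'.indicator (1 : E → ℝ≥0∞) (g : E))]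
  refine ENNReal.tsum_le_tsum fun g => ?_
  by_cases hg : (g : E) + x ∈ S
  · rw [Set.indicator_of_mem hg, Set.indicator_of_mem]
    · rfl
    · simpa using h g hg
  · rw [Set.indicator_of_notMem hg]; exact zero_le

lemma tsum_shift_ge {E : Type*} [AddCommGroup E] (L : AddSubgroup E) (S S' : Set E) (x : E)
    (g0 : L) (h : ∀ g : L, (g : E) + g0 ∈ S → (g : E) + x ∈ S') :
    ∑' g : L, S.indicator (1 : E → ℝ≥0∞) (g : E) ≤
      ∑' g : L, S'.indicator (1 : E → ℝ≥0∞) ((g : E) + x) := by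
  rw [← (Equiv.addRight g0).tsum_eq (fun g : L => S.indicator (1 : E → ℝ≥0∞) (g : E))]
  refine ENNReal.tsum_le_tsum fun g => ?_
  by_cases hg : (g : E) + g0 ∈ S
  · rw [Set.indicator_of_mem (by simpa using hg), Set.indicator_of_mem (h g hg)]
    rfl
  · rw [Set.indicator_of_notMem (by simpa using hg)]; exact zero_le

lemma real_conv (d : ℕ) (r t : ℝ) (hr : 0 ≤ r) (ht0 : 0 ≤ t) (ht1 : t ≤ 1) :
    (1 + r * t) ^ d ≤ 1 + t * (1 + r) ^ d - t := by
  have := (convexOn_pow (𝕜 := ℝ) d).2 (show (1 : ℝ) ∈ Set.Ici 0 by simp)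
    (show 1 + r ∈ Set.Ici (0 : ℝ) from (by linarith : (0 : ℝ) ≤ 1 + r))
    (show 0 ≤ 1 - t by linarith) ht0 (by ring)
  simp only [smul_eq_mul] at this
  have e : (1 - t) * 1 + t * (1 + r) = 1 + r * t := by ring
  rw [e] at this
  refine this.trans (le_of_eq (by ring))

lemma real_lo (d : ℕ) (hd : 0 < d) (r t : ℝ) (hr : 0 ≤ r) (ht0 : 0 ≤ t) :
    (r * t ≤ 1 → 1 - t * (1 + r) ^ d ≤ (1 - r * t) ^ d) ∧
    (¬ r * t ≤ 1 → 1 - t * (1 + r) ^ d ≤ 0) := by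
  have hb : 1 + d * r ≤ (1 + r) ^ d := one_add_mul_le_pow (by linarith) d
  have hb2 := mul_le_mul_of_nonneg_left hb ht0
  have hd1 : (1 : ℝ) ≤ d := by exact_mod_cast hd
  constructor
  · intro h1
    have h3 : 1 + d * (-(r * t)) ≤ (1 + -(r * t)) ^ d :=
      one_add_mul_le_pow (by linarith) d
    rw [← sub_eq_add_neg (1 : ℝ)] at h3
    linarith
  · intro h1
    have h2 : 1 * (r * t) ≤ d * (r * t) := by gcongr
    linarith

lemma real_fin (k n X t c : ℝ) (htn1 : 1 ≤ t / n)
    (h1 : k / n - k * X * (t / n) ≤ 1 + c) (h2 : 1 + c ≤ k / n + k * X * (t / n)) :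
    |c - k / n| ≤ (k * X + 1) * (t / n) := by
  rw [abs_le, add_mul]
  constructor <;> linarith

/-- the count -/
noncomputable def cnt (J : (Ideal (𝓞 K))⁰) (x : Vm K) : ℝ≥0∞ :=
  ∑' a : {a : 𝓞 K // a ∈ (J : Ideal (𝓞 K)) ∧ a ≠ 0},
    (Metric.closedBall (0 : Vm K) 1).indicator (1 : Vm K → ℝ≥0∞) (mE a.1 * x)

/-- the lattice of an ideal -/
noncomputable abbrev LJ (J : (Ideal (𝓞 K))⁰) : AddSubgroup (Vm K) :=
  (Submodule.span ℤ (Set.range (fractionalIdealLatticeBasis K (fI J)))).toAddSubgroup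

lemma mem_LJ (J : (Ideal (𝓞 K))⁰) (v : Vm K) :
    v ∈ LJ J ↔ ∃ a ∈ (J : Ideal (𝓞 K)), mE a = v := by
  rw [Submodule.mem_toAddSubgroup, mem_span_fractionalIdealLatticeBasis]
  constructor
  · rintro ⟨k, hk, rfl⟩
    rw [FractionalIdeal.coe_mk0] at hk
    obtain ⟨a', ha', rfl⟩ := (FractionalIdeal.mem_coeIdeal _).mp hk
    exact ⟨a', ha', rfl⟩
  · rintro ⟨a, ha, rfl⟩
    refine ⟨(a : K), ?_, rfl⟩
    rw [FractionalIdeal.coe_mk0]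
    exact (FractionalIdeal.mem_coeIdeal _).mpr ⟨a, ha, rfl⟩

lemma mE_inj {a b : 𝓞 K} (h : mE a = mE b) : a = b := by
  have := mixedEmbedding_injective K h
  exact RingOfIntegers.ext this

lemma tsum_LJ (J : (Ideal (𝓞 K))⁰) (x : Vm K) :
    ∑' g : LJ J, {v : Vm K | ‖x * v‖ ≤ 1}.indicator (1 : Vm K → ℝ≥0∞) (g : Vm K) = 1 + cnt J x := by
  let f : 𝓞 K → ℝ≥0∞ := fun a =>
    (Metric.closedBall (0 : Vm K) 1).indicator (1 : Vm K → ℝ≥0∞) (mE a * x)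
  let e : {a : 𝓞 K // a ∈ (J : Ideal (𝓞 K))} ≃ LJ J :=
    Equiv.ofBijective (fun a => ⟨mE a.1, (mem_LJ J _).mpr ⟨a.1, a.2, rfl⟩⟩) (by
      constructor
      · intro a b h
        exact Subtype.ext (mE_inj (congrArg Subtype.val h))
      · rintro ⟨v, hv⟩
        obtain ⟨a, ha, rfl⟩ := (mem_LJ J _).mp hv
        exact ⟨⟨a, ha⟩, rfl⟩)
  rw [← e.tsum_eq]
  have h1 : ∀ a : {a : 𝓞 K // a ∈ (J : Ideal (𝓞 K))},
      {v : Vm K | ‖x * v‖ ≤ 1}.indicator (1 : Vm K → ℝ≥0∞) (e a : Vm K) = f a.1 := by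
    intro a
    have : ((e a : LJ J) : Vm K) = mE a.1 := rfl
    simp only [this, f, Set.indicator, Set.mem_ofPred_eq, mem_closedBall_zero_iff, mul_comm x,
      Pi.one_apply]
  simp_rw [h1]
  have h2 : ∑' a : {a : 𝓞 K // a ∈ (J : Ideal (𝓞 K))}, f a.1 =
      ∑' a, ({a : 𝓞 K | a ∈ (J : Ideal (𝓞 K))}.indicator f) a :=
    tsum_subtype {a : 𝓞 K | a ∈ (J : Ideal (𝓞 K))} f
  have h3 : cnt J x = ∑' a, ({a : 𝓞 K | a ∈ (J : Ideal (𝓞 K)) ∧ a ≠ 0}.indicator f) a :=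
    tsum_subtype {a : 𝓞 K | a ∈ (J : Ideal (𝓞 K)) ∧ a ≠ 0} f
  rw [h2, h3, ENNReal.tsum_eq_add_tsum_ite 0]
  congr 1
  · have : (mE (0 : 𝓞 K)) = 0 := by simp [mE]
    simp [f, Set.indicator, this]
  · refine tsum_congr fun a => ?_
    by_cases ha : a = 0 <;> simp [Set.indicator, ha]

lemma vol_Sr (x : Vm K) (hx : mixedEmbedding.norm x ≠ 0) (r : ℝ) (hr : 0 ≤ r) :
    volume {v : Vm K | ‖x * v‖ ≤ r} =
      ENNReal.ofReal (r ^ finrank ℚ K * vB K / mixedEmbedding.norm x) := by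
  have hnx : 0 < mixedEmbedding.norm x := lt_of_le_of_ne (mixedEmbedding.norm_nonneg x) hx.symm
  have h := vol_mul_preimage x hx (Metric.closedBall 0 r) Metric.isClosed_closedBall.measurableSet
  simp only [mem_closedBall_zero_iff] at h
  rw [h, Measure.addHaar_closedBall _ _ hr, vol_ball, mixedEmbedding.finrank, div_eq_inv_mul,
    ENNReal.ofReal_mul (by positivity), ENNReal.ofReal_mul (by positivity),
    ENNReal.ofReal_inv_of_pos hnx, ENNReal.ofReal_coe_nnreal]

lemma meas_Sr (x : Vm K) (r : ℝ) : MeasurableSet {v : Vm K | ‖x * v‖ ≤ r} :=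
  measurableSet_le ((continuous_const.mul continuous_id).norm.measurable) measurable_const

lemma lattice_count (J : (Ideal (𝓞 K))⁰) (x : Vm K) (hx : mixedEmbedding.norm x ≠ 0) (ρ : ℝ)
    (hρ : ∀ v, ∃ a ∈ (J : Ideal (𝓞 K)), ‖x * (v - mE a)‖ ≤ ρ) :
    volume {v : Vm K | ‖x * v‖ ≤ 1 - ρ} ≤ ENNReal.ofReal (nI J * qK K) * (1 + cnt J x) ∧
    ENNReal.ofReal (nI J * qK K) * (1 + cnt J x) ≤ volume {v : Vm K | ‖x * v‖ ≤ 1 + ρ} := by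
  have h_fund := ZSpan.isAddFundamentalDomain' (fractionalIdealLatticeBasis K (fI J)) volume
  have : Countable (LJ J) := by
    change Countable (Submodule.span ℤ (Set.range (fractionalIdealLatticeBasis K (fI J))))
    infer_instance
  have key : ∀ r : ℝ, volume {v : Vm K | ‖x * v‖ ≤ r} =
      ∫⁻ y in ZSpan.fundamentalDomain (fractionalIdealLatticeBasis K (fI J)),
        ∑' g : LJ J, {v : Vm K | ‖x * v‖ ≤ r}.indicator (1 : Vm K → ℝ≥0∞) ((g : Vm K) + y) := by
    intro r
    rw [← lintegral_indicator_one (meas_Sr x r), h_fund.lintegral_eq_tsum'', ← lintegral_tsum]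
    · rfl
    · intro g
      exact ((measurable_one.indicator (meas_Sr x r)).comp (measurable_const_add _)).aemeasurable
  rw [key, key, ← vol_fd_ideal, ← tsum_LJ, mul_comm, ← setLIntegral_const]
  constructor
  · refine lintegral_mono fun y => ?_
    obtain ⟨a, ha, hle⟩ := hρ y
    refine tsum_shift_le (LJ J) _ _ y ⟨mE a, (mem_LJ J _).mpr ⟨a, ha, rfl⟩⟩ fun g hg => ?_
    simp only [Set.mem_ofPred_eq] at hg ⊢
    have e : x * ((g : Vm K) + mE a) = x * ((g : Vm K) + y) - x * (y - mE a) := by ring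
    rw [e]
    exact (norm_sub_le _ _).trans (by linarith)
  · refine lintegral_mono fun y => ?_
    obtain ⟨a, ha, hle⟩ := hρ y
    refine tsum_shift_ge (LJ J) _ _ y ⟨mE a, (mem_LJ J _).mpr ⟨a, ha, rfl⟩⟩ fun g hg => ?_
    simp only [Set.mem_ofPred_eq] at hg ⊢
    have e : x * ((g : Vm K) + y) = x * ((g : Vm K) + mE a) + x * (y - mE a) := by ring
    rw [e]
    exact (norm_add_le _ _).trans (by linarith)

/-- the residue type constant -/
noncomputable def kap (K : Type) [Field K] [NumberField K] : ℝ := vB K / qK K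

/-- error constant -/
noncomputable def M0 (K : Type) [Field K] [NumberField K] : ℝ :=
  kap K * (1 + rho0 K) ^ finrank ℚ K + 1

lemma kap_pos (K : Type) [Field K] [NumberField K] : 0 < kap K := by
  have h1 : (1 : ℝ) ≤ vB K := by exact_mod_cast one_le_convexBodyLTFactor K
  have := qK_pos K
  unfold kap; positivity

lemma rho0_nonneg (K : Type) [Field K] [NumberField K] : 0 ≤ rho0 K := by
  have := one_le_Dk K
  unfold rho0; positivity

set_option maxHeartbeats 1000000 in
lemma cnt_bound (J : (Ideal (𝓞 K))⁰) (x : Vm K) (hx : mixedEmbedding.norm x ≠ 0)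
    (n : ℝ) (hn : n = mixedEmbedding.norm x * nI J) (hn1 : n ≤ 1) :
    cnt J x ≠ ⊤ ∧
    |(cnt J x).toReal - kap K / n| ≤ M0 K * n ^ (1 / (finrank ℚ K : ℝ) - 1) := by
  have hnx : 0 < mixedEmbedding.norm x := lt_of_le_of_ne (mixedEmbedding.norm_nonneg x) hx.symm
  have hJ := one_le_nI J
  have hq := qK_pos K
  have hn0 : 0 < n := by rw [hn]; positivity
  have hd : 0 < finrank ℚ K := finrank_pos
  have hρ0 := rho0_nonneg K
  have hk := kap_pos K
  set d := finrank ℚ K with hdd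
  set t := n ^ (1 / (d : ℝ)) with ht
  have ht0 : 0 ≤ t := by positivity
  have ht1 : t ≤ 1 := Real.rpow_le_one hn0.le hn1 (by positivity)
  obtain ⟨hlo, hhi⟩ := lattice_count J x hx (rho0 K * t) (by rw [ht, hn]; exact covering J x hx)
  rw [vol_Sr x hx _ (by positivity)] at hhi
  have hv0 : (0 : ℝ) ≤ vB K := by positivity
  have hfin : 1 + cnt J x ≠ ⊤ := by
    intro h
    rw [h, ENNReal.mul_top (by rw [ne_eq, ENNReal.ofReal_eq_zero, not_le]; positivity)] at hhi
    simp at hhi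
  have hcf : cnt J x ≠ ⊤ := fun h => hfin (by rw [h]; simp)
  refine ⟨hcf, ?_⟩
  set c := (cnt J x).toReal with hc
  have hc0 : 0 ≤ c := ENNReal.toReal_nonneg
  have hce : ENNReal.ofReal (nI J * qK K) * (1 + cnt J x) =
      ENNReal.ofReal (nI J * qK K * (1 + c)) := by
    rw [ENNReal.ofReal_mul (p := nI J * qK K) (by positivity), ENNReal.ofReal_add zero_le_one hc0,
      ENNReal.ofReal_one, ENNReal.ofReal_toReal hcf]
  have hconv : (1 + rho0 K * t) ^ d ≤ 1 + t * (1 + rho0 K) ^ d - t := real_conv d _ _ hρ0 ht0 ht1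
  have hup : 1 + c ≤ kap K / n * (1 + rho0 K * t) ^ d := by
    rw [hce, ENNReal.ofReal_le_ofReal_iff (by positivity)] at hhi
    rw [kap, hn]
    have e : vB K / qK K / (mixedEmbedding.norm x * nI J) * (1 + rho0 K * t) ^ d =
      ((1 + rho0 K * t) ^ d * vB K / mixedEmbedding.norm x) / (nI J * qK K) := by
      field_simp
    rw [e, le_div_iff₀ (by positivity)]
    linarith
  have hdn : kap K / n * (1 - t * (1 + rho0 K) ^ d) ≤ 1 + c := by
    obtain ⟨r1, r2⟩ := real_lo d hd (rho0 K) t hρ0 ht0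
    by_cases h1 : rho0 K * t ≤ 1
    · rw [vol_Sr x hx _ (by linarith), hce, ENNReal.ofReal_le_ofReal_iff (by positivity)] at hlo
      have e : kap K / n * (1 - rho0 K * t) ^ d =
        ((1 - rho0 K * t) ^ d * vB K / mixedEmbedding.norm x) / (nI J * qK K) := by
        rw [kap, hn]; field_simp
      have h2 : kap K / n * (1 - rho0 K * t) ^ d ≤ 1 + c := by
        rw [e, div_le_iff₀ (by positivity)]; linarith
      refine le_trans ?_ h2
      have h4 := r1 h1
      gcongr
    · have h5 := r2 h1
      have : kap K / n * (1 - t * (1 + rho0 K) ^ d) ≤ 0 :=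
        mul_nonpos_of_nonneg_of_nonpos (by positivity) h5
      linarith
  have htn : n ^ (1 / (d : ℝ) - 1) = t / n := by
    rw [Real.rpow_sub hn0, Real.rpow_one]
  have htn1 : 1 ≤ t / n := by
    rw [← htn]
    have : (1 : ℝ) / d ≤ 1 := by
      rw [div_le_one (by positivity)]; exact_mod_cast hd
    exact Real.one_le_rpow_of_pos_of_le_one_of_nonpos hn0 hn1 (by linarith)
  have e1 : kap K / n * (1 - t * (1 + rho0 K) ^ d) =
    kap K / n - kap K * (1 + rho0 K) ^ d * (t / n) := by field_simp
  have e2 : kap K / n * (1 + rho0 K * t) ^ d ≤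
      kap K / n + kap K * (1 + rho0 K) ^ d * (t / n) := by
    calc _ ≤ kap K / n * (1 + t * (1 + rho0 K) ^ d) := by gcongr; linarith
      _ = _ := by field_simp
  rw [htn, M0]
  exact real_fin _ _ _ _ _ htn1 (e1 ▸ hdn) (hup.trans e2)

lemma norm_mE (a : 𝓞 K) :
    mixedEmbedding.norm (mE a) = (Ideal.absNorm (Ideal.span {a}) : ℝ) := by
  rw [norm_eq_norm, Ideal.absNorm_span_singleton, ← Algebra.coe_norm_int, Nat.cast_natAbs]
  push_cast
  rfl

lemma cnt_eq_zero (J : (Ideal (𝓞 K))⁰) (x : Vm K)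
    (h : 1 < mixedEmbedding.norm x * nI J) : cnt J x = 0 := by
  rw [cnt, ENNReal.tsum_eq_zero]
  rintro ⟨a, ha, ha0⟩
  refine Set.indicator_of_notMem ?_ _
  rw [mem_closedBall_zero_iff]
  intro hle
  have h1 : mixedEmbedding.norm (mE a * x) ≤ 1 := by
    rw [mixedEmbedding.norm_apply]
    refine Finset.prod_le_one (fun w _ => pow_nonneg (normAtPlace_nonneg _ _) _) fun w _ => ?_
    exact pow_le_one₀ (normAtPlace_nonneg _ _) ((norm_le_iff_nap _ _).mp hle w)
  have h2 : nI J ≤ mixedEmbedding.norm (mE a) := by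
    rw [norm_mE]
    have h3 : Ideal.absNorm (J : Ideal (𝓞 K)) ∣ Ideal.absNorm (Ideal.span {a}) :=
      Ideal.absNorm_dvd_absNorm_of_le ((Ideal.span_singleton_le_iff_mem _).mpr ha)
    have h4 : Ideal.absNorm (Ideal.span {a}) ≠ 0 := by
      rw [ne_eq, Ideal.absNorm_eq_zero_iff, Ideal.span_singleton_eq_bot]; exact ha0
    exact_mod_cast Nat.le_of_dvd (Nat.pos_of_ne_zero h4) h3
  rw [map_mul] at h1
  nlinarith [mixedEmbedding.norm_nonneg x]

end P5
end Stmt12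

open NumberField

namespace Stmt12

section P6
open NumberField.mixedEmbedding NumberField.InfinitePlace MeasureTheory Module
open scoped Classical ENNReal NNReal nonZeroDivisors IntermediateField
variable {K : Type} [Field K] [NumberField K]

lemma countable_OK (K : Type) [Field K] [NumberField K] : Countable (𝓞 K) :=
  (Module.Free.chooseBasis ℤ (𝓞 K)).equivFun.injective.countable

lemma countable_units (K : Type) [Field K] [NumberField K] : Countable (𝓞 K)ˣ := by
  have := countable_OK K
  exact (Units.val_injective (α := 𝓞 K)).countable

lemma countable_ideals (K : Type) [Field K] [NumberField K] : Countable (Ideal (𝓞 K)) := by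
  have := countable_OK K
  have h : Function.Surjective (fun s : Finset (𝓞 K) => Ideal.span (s : Set (𝓞 K))) := by
    intro I
    obtain ⟨s, hs⟩ := (isNoetherianRing_iff_ideal_fg (𝓞 K)).mp inferInstance I
    exact ⟨s, hs⟩
  exact h.countable

lemma ae_norm_ne_zero (K : Type) [Field K] [NumberField K] :
    ∀ᵐ x : Vm K, mixedEmbedding.norm x ≠ 0 := by
  have h : ∀ w : InfinitePlace K, ∀ᵐ x : Vm K, normAtPlace w x ≠ 0 := by
    intro w
    rcases isReal_or_isComplex w with hw | hw
    · let p : Submodule ℝ (Vm K) := LinearMap.ker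
        ((LinearMap.proj (R := ℝ) (φ := fun _ : {w : InfinitePlace K // IsReal w} => ℝ)
          ⟨w, hw⟩).comp (LinearMap.fst ℝ _ _))
      have hp : p ≠ ⊤ := by
        intro h
        have : (1 : Vm K) ∈ p := by rw [h]; trivial
        simp [p] at this
      have h0 := Measure.addHaar_submodule (volume : Measure (Vm K)) p hp
      rw [ae_iff]
      refine measure_mono_null ?_ h0
      intro x hx
      simp only [ne_eq, not_not, Set.mem_ofPred_eq] at hx
      rw [normAtPlace_apply_of_isReal hw, norm_eq_zero] at hx
      simpa [p] using hx
    · let p : Submodule ℝ (Vm K) := LinearMap.ker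
        ((LinearMap.proj (R := ℝ) (φ := fun _ : {w : InfinitePlace K // IsComplex w} => ℂ)
          ⟨w, hw⟩).comp (LinearMap.snd ℝ _ _))
      have hp : p ≠ ⊤ := by
        intro h
        have : (1 : Vm K) ∈ p := by rw [h]; trivial
        simp [p] at this
      have h0 := Measure.addHaar_submodule (volume : Measure (Vm K)) p hp
      rw [ae_iff]
      refine measure_mono_null ?_ h0
      intro x hx
      simp only [ne_eq, not_not, Set.mem_ofPred_eq] at hx
      rw [normAtPlace_apply_of_isComplex hw, norm_eq_zero] at hx
      simpa [p] using hx
  filter_upwards [ae_all_iff.mpr h] with x hx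
  rw [mixedEmbedding.norm_apply]
  exact Finset.prod_ne_zero_iff.mpr fun w _ => pow_ne_zero _ (hx w)

/-- indicator of the cone -/
noncomputable abbrev icone (x : Vm K) : ℝ≥0∞ :=
  (fundamentalCone K).indicator (1 : Vm K → ℝ≥0∞) x

lemma meas_cone : MeasurableSet (fundamentalCone K) := measurableSet_fundamentalCone K

lemma meas_icone : Measurable (icone (K := K)) := measurable_one.indicator meas_cone

lemma sum_units (x : Vm K) (hx : mixedEmbedding.norm x ≠ 0) :
    ∑' u : (𝓞 K)ˣ, icone (u • x) = Units.torsionOrder K := by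
  obtain ⟨u0, hu0⟩ := fundamentalCone.exists_unit_smul_mem hx
  rw [← (Equiv.mulRight u0).tsum_eq]
  have h : ∀ u : (𝓞 K)ˣ, icone ((Equiv.mulRight u0 u) • x) =
      (Units.torsion K : Set (𝓞 K)ˣ).indicator (fun _ => (1 : ℝ≥0∞)) u := by
    intro u
    have := fundamentalCone.unit_smul_mem_iff_mem_torsion hu0 u
    simp only [icone, Set.indicator, Equiv.coe_mulRight, mul_smul, this, SetLike.mem_coe,
      Pi.one_apply]
  simp_rw [h]
  rw [← tsum_subtype, ENNReal.tsum_set_one, Units.torsionOrder]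
  have hf0 : Finite (Units.torsion K) := inferInstance
  have hf : (Units.torsion K : Set (𝓞 K)ˣ).Finite := Set.finite_coe_iff.mp hf0
  rw [← hf.cast_ncard_eq]
  have : (Units.torsion K : Set (𝓞 K)ˣ).ncard = Nat.card (Units.torsion K) :=
    (Nat.card_coe_set_eq _).symm
  rw [this]
  simp

lemma measurable_unit_smul (u : (𝓞 K)ˣ) : Measurable (fun x : Vm K => u • x) :=
  measurable_const_mul (mE (u : 𝓞 K))

lemma norm_unit (u : (𝓞 K)ˣ) : mixedEmbedding.norm (mE (u : 𝓞 K)) = 1 := by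
  have := norm_unit_smul u (1 : Vm K)
  rwa [unitSMul_smul, mul_one, map_one] at this

lemma unfold_units (φ : Vm K → ℝ≥0∞) (hφ : Measurable φ) :
    ∑' u : (𝓞 K)ˣ, ∫⁻ x in fundamentalCone K, φ (u • x) = Units.torsionOrder K * ∫⁻ x, φ x := by
  have := countable_units K
  have h1 : ∀ u : (𝓞 K)ˣ, ∫⁻ x in fundamentalCone K, φ (u • x) =
      ∫⁻ x, icone (u⁻¹ • x) * φ x := by
    intro u
    rw [← lintegral_indicator meas_cone]
    have h2 := lintegral_mul_left (mE (u : 𝓞 K)) (by rw [norm_unit]; norm_num)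
      (fun x => icone (u⁻¹ • x) * φ x) ((meas_icone.comp (measurable_unit_smul u⁻¹)).mul hφ)
    rw [norm_unit, ENNReal.ofReal_one, inv_one, one_mul] at h2
    rw [← h2]
    refine lintegral_congr fun x => ?_
    have e : mE (u : 𝓞 K) * x = u • x := rfl
    rw [e, inv_smul_smul]
    by_cases hx : x ∈ fundamentalCone K <;> simp [Set.indicator, hx]
  simp_rw [h1]
  rw [← lintegral_tsum, ← lintegral_const_mul _ hφ]
  · refine lintegral_congr_ae ?_
    filter_upwards [ae_norm_ne_zero K] with x hx
    rw [ENNReal.tsum_mul_right, ← sum_units x hx, ← (Equiv.inv (𝓞 K)ˣ).tsum_eq]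
    rfl
  · intro u
    exact ((meas_icone.comp (measurable_unit_smul u⁻¹)).mul hφ).aemeasurable

/-- ideals in the inverse class -/
abbrev IJ (J : (Ideal (𝓞 K))⁰) : Type :=
  {I : Ideal (𝓞 K) // I ≠ ⊥ ∧ Submodule.IsPrincipal (I * (J : Ideal (𝓞 K)))}

lemma exists_gen (J : (Ideal (𝓞 K))⁰) (I : IJ J) :
    ∃ γ : 𝓞 K, γ ≠ 0 ∧ Ideal.span {γ} = I.1 * (J : Ideal (𝓞 K)) := by
  obtain ⟨γ, hγ⟩ := I.2.2
  refine ⟨γ, ?_, hγ.symm⟩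
  rintro rfl
  rw [Submodule.span_zero_singleton] at hγ
  rcases Ideal.mul_eq_bot.mp hγ with h | h
  · exact I.2.1 h
  · exact nonZeroDivisors.ne_zero J.2 h

/-- a generator -/
noncomputable def gen (J : (Ideal (𝓞 K))⁰) (I : IJ J) : 𝓞 K := (exists_gen J I).choose

lemma gen_ne (J : (Ideal (𝓞 K))⁰) (I : IJ J) : gen J I ≠ 0 := (exists_gen J I).choose_spec.1
lemma gen_span (J : (Ideal (𝓞 K))⁰) (I : IJ J) :
    Ideal.span {gen J I} = I.1 * (J : Ideal (𝓞 K)) := (exists_gen J I).choose_spec.2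

lemma gen_mem (J : (Ideal (𝓞 K))⁰) (I : IJ J) : gen J I ∈ (J : Ideal (𝓞 K)) := by
  have h := Ideal.mem_span_singleton_self (gen J I)
  rw [gen_span] at h
  have h' : I.1 * (J : Ideal (𝓞 K)) ≤ (J : Ideal (𝓞 K)) := Ideal.mul_le_right
  exact h' h

lemma tsum_ideal (J : (Ideal (𝓞 K))⁰) (f : 𝓞 K → ℝ≥0∞) :
    ∑' a : {a : 𝓞 K // a ∈ (J : Ideal (𝓞 K)) ∧ a ≠ 0}, f a.1 =
      ∑' I : IJ J, ∑' u : (𝓞 K)ˣ, f (gen J I * u) := by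
  rw [← ENNReal.tsum_prod]
  let e : IJ J × (𝓞 K)ˣ → {a : 𝓞 K // a ∈ (J : Ideal (𝓞 K)) ∧ a ≠ 0} := fun p =>
    ⟨gen J p.1 * p.2, by
      exact ⟨Ideal.mul_mem_right _ _ (gen_mem J p.1), mul_ne_zero (gen_ne J p.1) p.2.ne_zero⟩⟩
  have hspan : ∀ p, Ideal.span {(e p).1} = p.1.1 * (J : Ideal (𝓞 K)) := by
    intro p
    rw [← gen_span]
    exact Ideal.span_singleton_mul_right_unit p.2.isUnit _
  have he : Function.Bijective e := by
    constructor
    · intro p p' h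
      have h1 := hspan p
      rw [h, hspan p'] at h1
      have h2 : p'.1.1 = p.1.1 := mul_right_cancel₀ (nonZeroDivisors.ne_zero J.2) h1
      have h3 : p.1 = p'.1 := Subtype.ext h2.symm
      have h4 : gen J p.1 * p.2 = gen J p'.1 * p'.2 := congrArg Subtype.val h
      rw [h3] at h4
      have h5 := mul_left_cancel₀ (gen_ne J p'.1) h4
      exact Prod.ext h3 (Units.ext h5)
    · rintro ⟨a, ha, ha0⟩
      have hdvd : (J : Ideal (𝓞 K)) ∣ Ideal.span {a} := by
        rw [Ideal.dvd_span_singleton]; exact ha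
      obtain ⟨I, hI⟩ := hdvd
      have hI0 : I ≠ ⊥ := by
        rintro rfl
        rw [Ideal.mul_bot, Ideal.span_singleton_eq_bot] at hI
        exact ha0 hI
      let I' : IJ J := ⟨I, hI0, ⟨a, by rw [mul_comm, ← hI]⟩⟩
      have h1 : Ideal.span {gen J I'} = Ideal.span {a} := by
        rw [gen_span, hI, mul_comm]
      obtain ⟨u, hu⟩ := Ideal.span_singleton_eq_span_singleton.mp h1
      exact ⟨(I', u), Subtype.ext hu⟩
  rw [← (Equiv.ofBijective e he).tsum_eq]
  rfl

lemma meas_norm : Measurable (mixedEmbedding.norm : Vm K → ℝ) :=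
  (mixedEmbedding.continuous_norm K).measurable

set_option maxHeartbeats 1000000 in
lemma unfold_one (J : (Ideal (𝓞 K))⁰) (k : ℝ → ℝ≥0∞) (hk : Measurable k) :
    ENNReal.ofReal (nI J) * ∫⁻ x in fundamentalCone K, cnt J x * k (mixedEmbedding.norm x * nI J) =
      Units.torsionOrder K * ∑' I : IJ J, (ENNReal.ofReal (Ideal.absNorm I.1 : ℝ))⁻¹ *
        ∫⁻ b in Metric.closedBall (0 : Vm K) 1, k (mixedEmbedding.norm b / (Ideal.absNorm I.1 : ℝ)) := by
  have := countable_units K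
  have := countable_ideals K
  have hB : MeasurableSet (Metric.closedBall (0 : Vm K) 1) :=
    Metric.isClosed_closedBall.measurableSet
  have hJ := one_le_nI J
  have hind : Measurable ((Metric.closedBall (0 : Vm K) 1).indicator (1 : Vm K → ℝ≥0∞)) :=
    measurable_one.indicator hB
  have hkm : Measurable fun x : Vm K => k (mixedEmbedding.norm x * nI J) :=
    hk.comp (meas_norm.mul_const _)
  have hφ : ∀ a : 𝓞 K, Measurable (fun x : Vm K =>
      (Metric.closedBall (0 : Vm K) 1).indicator (1 : Vm K → ℝ≥0∞) (mE a * x) *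
        k (mixedEmbedding.norm x * nI J)) := fun a =>
    (hind.comp (measurable_const_mul (mE a))).mul hkm
  have hc : ∀ x : Vm K, cnt J x * k (mixedEmbedding.norm x * nI J) =
      ∑' I : IJ J, ∑' u : (𝓞 K)ˣ, (Metric.closedBall (0 : Vm K) 1).indicator
        (1 : Vm K → ℝ≥0∞) (mE (gen J I * (u : 𝓞 K)) * x) * k (mixedEmbedding.norm x * nI J) := by
    intro x
    rw [cnt, tsum_ideal J (fun a => (Metric.closedBall (0 : Vm K) 1).indicator
      (1 : Vm K → ℝ≥0∞) (mE a * x)), ← ENNReal.tsum_mul_right]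
    exact tsum_congr fun I => ENNReal.tsum_mul_right.symm
  simp_rw [hc]
  have : Countable (IJ J) := inferInstance
  rw [lintegral_tsum]
  swap
  · intro I
    refine (Measurable.ennreal_tsum fun u => hφ _).aemeasurable
  rw [← ENNReal.tsum_mul_left, ← ENNReal.tsum_mul_left]
  refine tsum_congr fun I => ?_
  rw [lintegral_tsum (fun u => (hφ _).aemeasurable)]
  have h1 : ∀ u : (𝓞 K)ˣ, ∀ x : Vm K,
      (Metric.closedBall (0 : Vm K) 1).indicator (1 : Vm K → ℝ≥0∞) (mE (gen J I * (u : 𝓞 K)) * x) *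
        k (mixedEmbedding.norm x * nI J) =
      (Metric.closedBall (0 : Vm K) 1).indicator (1 : Vm K → ℝ≥0∞) (mE (gen J I) * (u • x)) *
        k (mixedEmbedding.norm (u • x) * nI J) := by
    intro u x
    rw [norm_unit_smul, unitSMul_smul, ← mul_assoc]
    simp only [mE, map_mul]
  simp_rw [h1]
  rw [unfold_units (fun x => (Metric.closedBall (0 : Vm K) 1).indicator (1 : Vm K → ℝ≥0∞)
    (mE (gen J I) * x) * k (mixedEmbedding.norm x * nI J)) (hφ _)]
  have hI0 : (0 : ℝ) < (Ideal.absNorm I.1 : ℝ) := by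
    have : Ideal.absNorm I.1 ≠ 0 := by
      rw [ne_eq, Ideal.absNorm_eq_zero_iff]; exact I.2.1
    positivity
  have hng : mixedEmbedding.norm (mE (gen J I)) = (Ideal.absNorm I.1 : ℝ) * nI J := by
    rw [norm_mE, gen_span, map_mul]; push_cast; rfl
  have hng0 : mixedEmbedding.norm (mE (gen J I)) ≠ 0 := by rw [hng]; positivity
  have h2 := lintegral_mul_left (mE (gen J I)) hng0
    (fun y => (Metric.closedBall (0 : Vm K) 1).indicator (1 : Vm K → ℝ≥0∞) y *
      k (mixedEmbedding.norm y / (Ideal.absNorm I.1 : ℝ)))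
    (hind.mul (hk.comp (meas_norm.div_const _)))
  have h3 : ∀ x : Vm K, mixedEmbedding.norm (mE (gen J I) * x) / (Ideal.absNorm I.1 : ℝ) =
      mixedEmbedding.norm x * nI J := by
    intro x
    rw [map_mul, hng]; field_simp
  simp_rw [h3] at h2
  rw [h2, hng, ENNReal.ofReal_mul hI0.le, ENNReal.mul_inv (by simp) (by simp),
    ← lintegral_indicator hB]
  have h4 : ∀ y : Vm K, (Metric.closedBall (0 : Vm K) 1).indicator (1 : Vm K → ℝ≥0∞) y *
      k (mixedEmbedding.norm y / (Ideal.absNorm I.1 : ℝ)) =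
      (Metric.closedBall (0 : Vm K) 1).indicator
        (fun y => k (mixedEmbedding.norm y / (Ideal.absNorm I.1 : ℝ))) y := by
    intro y
    by_cases hy : y ∈ Metric.closedBall (0 : Vm K) 1
    · rw [Set.indicator_of_mem hy, Set.indicator_of_mem hy]; simp
    · rw [Set.indicator_of_notMem hy, Set.indicator_of_notMem hy]; simp
  simp_rw [h4]
  set A := ENNReal.ofReal (nI J) with hA
  have hA0 : A ≠ 0 := by rw [hA, ne_eq, ENNReal.ofReal_eq_zero, not_le]; linarith
  have hA1 : A ≠ ⊤ := ENNReal.ofReal_ne_top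
  set T := ∫⁻ y, (Metric.closedBall (0 : Vm K) 1).indicator
        (fun y => k (mixedEmbedding.norm y / (Ideal.absNorm I.1 : ℝ))) y
  set B := (ENNReal.ofReal (Ideal.absNorm I.1 : ℝ))⁻¹
  calc A * (Units.torsionOrder K * (B * A⁻¹ * T)) = (A * A⁻¹) * (Units.torsionOrder K * (B * T)) := by ring
    _ = _ := by rw [ENNReal.mul_inv_cancel hA0 hA1, one_mul]

/-- representative of a class -/
noncomputable def rep (C : ClassGroup (𝓞 K)) : (Ideal (𝓞 K))⁰ :=
  (ClassGroup.mk0_surjective C).choose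

lemma mk0_rep (C : ClassGroup (𝓞 K)) : ClassGroup.mk0 (rep C) = C :=
  (ClassGroup.mk0_surjective C).choose_spec

lemma IJ_iff (C : ClassGroup (𝓞 K)) (I : (Ideal (𝓞 K))⁰) :
    Submodule.IsPrincipal ((I : Ideal (𝓞 K)) * (rep C : Ideal (𝓞 K))) ↔
      C = (ClassGroup.mk0 I)⁻¹ := by
  have := ClassGroup.mk0_eq_one_iff (I := (I : Ideal (𝓞 K)) * (rep C : Ideal (𝓞 K)))
    (I * rep C).2
  rw [← this, eq_inv_iff_mul_eq_one]
  have e : (⟨(I : Ideal (𝓞 K)) * (rep C : Ideal (𝓞 K)), (I * rep C).2⟩ : (Ideal (𝓞 K))⁰)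
    = I * rep C := rfl
  rw [e, map_mul, mk0_rep, mul_comm]

lemma tsum_classes (f : Ideal (𝓞 K) → ℝ≥0∞) :
    ∑ C : ClassGroup (𝓞 K), ∑' I : IJ (rep C), f I.1 =
      ∑' I : {I : Ideal (𝓞 K) // I ≠ ⊥}, f I.1 := by
  rw [← tsum_fintype (L := .unconditional _), ← ENNReal.tsum_sigma]
  let e : (Σ C : ClassGroup (𝓞 K), IJ (rep C)) → {I : Ideal (𝓞 K) // I ≠ ⊥} :=
    fun p => ⟨p.2.1, p.2.2.1⟩
  have he : Function.Bijective e := by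
    constructor
    · rintro ⟨C, I, hI0, hI⟩ ⟨C', I', hI0', hI'⟩ h
      have h1 : I = I' := congrArg Subtype.val h
      subst h1
      have a1 := (IJ_iff C ⟨I, mem_nonZeroDivisors_of_ne_zero hI0⟩).mp hI
      have a2 := (IJ_iff C' ⟨I, mem_nonZeroDivisors_of_ne_zero hI0⟩).mp hI'
      have : C = C' := a1.trans a2.symm
      subst this
      rfl
    · rintro ⟨I, hI0⟩
      exact ⟨⟨_, ⟨I, hI0, (IJ_iff _ ⟨I, mem_nonZeroDivisors_of_ne_zero hI0⟩).mpr rfl⟩⟩, rfl⟩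
  rw [← (Equiv.ofBijective e he).tsum_eq]
  rfl

lemma unfold_all (k : ℝ → ℝ≥0∞) (hk : Measurable k) :
    ∑ C : ClassGroup (𝓞 K), ENNReal.ofReal (nI (rep C)) *
      ∫⁻ x in fundamentalCone K, cnt (rep C) x * k (mixedEmbedding.norm x * nI (rep C)) =
      Units.torsionOrder K * ∑' I : {I : Ideal (𝓞 K) // I ≠ ⊥},
        (ENNReal.ofReal (Ideal.absNorm I.1 : ℝ))⁻¹ *
        ∫⁻ b in Metric.closedBall (0 : Vm K) 1,
          k (mixedEmbedding.norm b / (Ideal.absNorm I.1 : ℝ)) := by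
  simp_rw [unfold_one _ k hk]
  rw [← Finset.mul_sum, tsum_classes (fun I => (ENNReal.ofReal (Ideal.absNorm I : ℝ))⁻¹ *
        ∫⁻ b in Metric.closedBall (0 : Vm K) 1,
          k (mixedEmbedding.norm b / (Ideal.absNorm I : ℝ)))]

end P6
end Stmt12

open NumberField

namespace Stmt12

section P7
open NumberField.mixedEmbedding NumberField.InfinitePlace MeasureTheory Module
open scoped Classical ENNReal NNReal nonZeroDivisors IntermediateField
variable {K : Type} [Field K] [NumberField K]

/-- truncated power -/
noncomputable def pw (s : ℂ) (m : ℕ) (t : ℝ) : ℂ :=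
  if t ≤ 1 then (((t ^ m : ℝ)) : ℂ) ^ (s - 1) else 0

lemma prod_cpow {ι : Type} (S : Finset ι) (f : ι → ℝ) (hf : ∀ i, 0 ≤ f i) (s : ℂ) :
    ((∏ i ∈ S, f i : ℝ) : ℂ) ^ s = ∏ i ∈ S, ((f i : ℝ) : ℂ) ^ s := by
  induction S using Finset.induction_on with
  | empty => simp
  | insert a S ha ih =>
    rw [Finset.prod_insert ha, Finset.prod_insert ha, Complex.ofReal_mul,
      Complex.mul_cpow_ofReal_nonneg (hf a) (Finset.prod_nonneg fun i _ => hf i), ih]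

lemma pow_int (s : ℂ) (hs : 1 < s.re) : ∫ y in Set.Ioc (0:ℝ) 1, (y : ℂ) ^ (s - 1) = 1 / s := by
  rw [← intervalIntegral.integral_of_le zero_le_one, integral_cpow (Or.inl (by simp; linarith))]
  have : s ≠ 0 := by rintro rfl; simp at hs; linarith
  simp [Complex.zero_cpow this]

lemma pw_real (s : ℂ) (hs : 1 < s.re) : ∫ x : ℝ, pw s 1 ‖x‖ = 2 / s := by
  rw [integral_fun_norm_addHaar volume (pw s 1)]
  have h : ∫ y in Set.Ioi (0:ℝ), y ^ (finrank ℝ ℝ - 1) • pw s 1 y = 1 / s := by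
    rw [← pow_int s hs, ← integral_indicator measurableSet_Ioi,
      ← integral_indicator measurableSet_Ioc]
    congr 1
    ext y
    by_cases h0 : 0 < y <;> by_cases h1 : y ≤ 1 <;> simp [Set.indicator, h0, h1, pw]
  rw [h]
  simp [Measure.real, Real.volume_ball]
  ring

lemma pw_complex (s : ℂ) (hs : 1 < s.re) : ∫ x : ℂ, pw s 2 ‖x‖ = Real.pi / s := by
  rw [integral_fun_norm_addHaar volume (pw s 2)]
  have h : ∫ y in Set.Ioi (0:ℝ), y ^ (finrank ℝ ℂ - 1) • pw s 2 y = 1 / (2 * s) := by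
    rw [← pow_int (2 * s) (by simp; linarith), ← integral_indicator measurableSet_Ioi,
      ← integral_indicator measurableSet_Ioc]
    congr 1
    ext y
    by_cases h0 : 0 < y <;> by_cases h1 : y ≤ 1 <;> simp [Set.indicator, h0, h1, pw]
    have hy : (y : ℂ) ≠ 0 := by exact_mod_cast h0.ne'
    rw [pow_two, Complex.mul_cpow_ofReal_nonneg h0.le h0.le, ← Complex.cpow_add _ _ hy]
    have e : 2 * s - 1 = (s - 1 + (s - 1)) + 1 := by ring
    rw [e, Complex.cpow_add _ 1 hy, Complex.cpow_one, Complex.cpow_add _ _ hy, mul_comm]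
  rw [h]
  have hs0 : s ≠ 0 := by rintro rfl; simp at hs; linarith
  simp [Measure.real, Complex.volume_ball]
  field_simp

lemma ind_eq (s : ℂ) (x : Vm K) :
    (Metric.closedBall (0 : Vm K) 1).indicator
      (fun x => ((mixedEmbedding.norm x : ℝ) : ℂ) ^ (s - 1)) x =
    ∏ w, pw s w.mult (normAtPlace w x) := by
  by_cases hx : x ∈ Metric.closedBall (0 : Vm K) 1
  · rw [Set.indicator_of_mem hx, mixedEmbedding.norm_apply,
      prod_cpow _ _ (fun w => pow_nonneg (normAtPlace_nonneg w x) _)]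
    rw [mem_closedBall_zero_iff, norm_le_iff_nap] at hx
    simp [pw, hx]
  · rw [Set.indicator_of_notMem hx]
    rw [mem_closedBall_zero_iff, norm_le_iff_nap] at hx
    push Not at hx
    obtain ⟨w, hw⟩ := hx
    symm
    apply Finset.prod_eq_zero (Finset.mem_univ w)
    simp [pw, not_le.mpr hw]

lemma Zeta_B (K : Type) [Field K] [NumberField K] (s : ℂ) (hs : 1 < s.re) :
    ∫ x in Metric.closedBall (0 : Vm K) 1, ((mixedEmbedding.norm x : ℝ) : ℂ) ^ (s - 1) =
      (vB K : ℝ) / s ^ (nrRealPlaces K + nrComplexPlaces K) := by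
  rw [← integral_indicator Metric.isClosed_closedBall.measurableSet]
  simp_rw [ind_eq]
  have h : ∀ x : Vm K, ∏ w, pw s w.mult (normAtPlace w x) =
      (∏ w : {w : InfinitePlace K // IsReal w}, pw s 1 ‖x.1 w‖) *
      (∏ w : {w : InfinitePlace K // IsComplex w}, pw s 2 ‖x.2 w‖) := by
    intro x
    rw [prod_eq_prod_mul_prod]
    congr 1
    · refine Finset.prod_congr rfl fun w _ => ?_
      rw [mult_isReal, normAtPlace_apply_of_isReal w.2]
    · refine Finset.prod_congr rfl fun w _ => ?_
      rw [mult_isComplex, normAtPlace_apply_of_isComplex w.2]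
  simp_rw [h]
  have h2 := integral_prod_mul (μ := (volume : Measure ({w : InfinitePlace K // IsReal w} → ℝ)))
    (ν := (volume : Measure ({w : InfinitePlace K // IsComplex w} → ℂ)))
    (fun x => ∏ w, pw s 1 ‖x w‖) (fun y => ∏ w, pw s 2 ‖y w‖)
  refine Eq.trans h2 ?_
  rw [integral_fintype_prod_volume_eq_prod (fun _ (t : ℝ) => pw s 1 ‖t‖),
    integral_fintype_prod_volume_eq_prod (fun _ (t : ℂ) => pw s 2 ‖t‖), pw_real s hs,
    pw_complex s hs]
  simp only [Finset.prod_const, Finset.card_univ]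
  rw [div_pow, div_pow, pow_add, div_mul_div_comm]
  simp [vB, convexBodyLTFactor, nrRealPlaces, nrComplexPlaces]

lemma norm_le_one_of_mem (x : Vm K) (hx : x ∈ Metric.closedBall (0 : Vm K) 1) :
    mixedEmbedding.norm x ≤ 1 := by
  rw [mem_closedBall_zero_iff, norm_le_iff_nap] at hx
  rw [mixedEmbedding.norm_apply]
  exact Finset.prod_le_one (fun w _ => pow_nonneg (normAtPlace_nonneg w x) _)
    fun w _ => pow_le_one₀ (normAtPlace_nonneg w x) (hx w)

end P7
end Stmt12

open NumberField

namespace Stmt12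

section P8
open NumberField.mixedEmbedding NumberField.InfinitePlace MeasureTheory Module
open scoped Classical ENNReal NNReal nonZeroDivisors IntermediateField Pointwise
variable {K : Type} [Field K] [NumberField K]

/-- volume of the truncated cone -/
noncomputable def V0 (K : Type) [Field K] [NumberField K] : ℝ :=
  (volume (fundamentalCone.normLeOne K)).toReal

lemma V0_nonneg (K : Type) [Field K] [NumberField K] : 0 ≤ V0 K := ENNReal.toReal_nonneg

lemma vol_normLeOne (K : Type) [Field K] [NumberField K] :
    volume (fundamentalCone.normLeOne K) = ENNReal.ofReal (V0 K) := by
  rw [V0, ENNReal.ofReal_toReal]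
  rw [fundamentalCone.volume_normLeOne]
  exact ENNReal.mul_ne_top (ENNReal.mul_ne_top (by simp) (by simp)) (by simp)

lemma finrank_Vm (K : Type) [Field K] [NumberField K] : finrank ℝ (Vm K) = finrank ℚ K :=
  mixedEmbedding.finrank K

lemma vol_cone_le (c : ℝ) (hc : 0 < c) :
    volume (fundamentalCone K ∩ {x : Vm K | mixedEmbedding.norm x ≤ c}) =
      ENNReal.ofReal (c * V0 K) := by
  have hd : (finrank ℚ K : ℝ) ≠ 0 := by exact_mod_cast finrank_pos.ne'
  set r : ℝ := c ^ (1 / (finrank ℚ K : ℝ)) with hr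
  have hr0 : 0 < r := Real.rpow_pos_of_pos hc _
  have hrd : r ^ finrank ℚ K = c := by
    rw [hr, ← Real.rpow_natCast, ← Real.rpow_mul hc.le, one_div_mul_cancel hd, Real.rpow_one]
  have e : fundamentalCone K ∩ {x : Vm K | mixedEmbedding.norm x ≤ c} =
      r • fundamentalCone.normLeOne K := by
    ext x
    rw [Set.mem_smul_set_iff_inv_smul_mem₀ hr0.ne']
    simp only [Set.mem_inter_iff, Set.mem_ofPred_eq, fundamentalCone.normLeOne]
    rw [fundamentalCone.smul_mem_iff_mem (inv_ne_zero hr0.ne'), mixedEmbedding.norm_smul,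
      abs_of_pos (inv_pos.mpr hr0), inv_pow, hrd, inv_mul_le_iff₀ hc, mul_one]
  rw [e, Measure.addHaar_smul, finrank_Vm, hrd, abs_of_pos hc, vol_normLeOne,
    ENNReal.ofReal_mul hc.le]

lemma cone_norm_pos (x : Vm K) (hx : x ∈ fundamentalCone K) : 0 < mixedEmbedding.norm x :=
  lt_of_le_of_ne (mixedEmbedding.norm_nonneg x) (Ne.symm hx.2)

/-- normalised norm -/
noncomputable abbrev nn (J : (Ideal (𝓞 K))⁰) (x : Vm K) : ℝ := mixedEmbedding.norm x * nI J

lemma meas_nn (J : (Ideal (𝓞 K))⁰) : Measurable (nn J) := meas_norm.mul_const _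

/-- normalised measure on the truncated cone -/
noncomputable def muJ (J : (Ideal (𝓞 K))⁰) : Measure (Vm K) :=
  ENNReal.ofReal (nI J) • volume.restrict (fundamentalCone K ∩ {x | nn J x ≤ 1})

lemma muJ_map (J : (Ideal (𝓞 K))⁰) :
    (muJ J).map (nn J) = ENNReal.ofReal (V0 K) • volume.restrict (Set.Ioc (0:ℝ) 1) := by
  have hJ := one_le_nI J
  have hJ0 : 0 < nI J := by linarith
  symm
  have hfin : IsFiniteMeasure (ENNReal.ofReal (V0 K) • volume.restrict (Set.Ioc (0:ℝ) 1)) := by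
    constructor
    simp
  apply Measure.ext_of_Iic
  intro a
  rw [Measure.map_apply (meas_nn J) measurableSet_Iic, muJ, Measure.smul_apply, Measure.smul_apply,
    Measure.restrict_apply measurableSet_Iic,
    Measure.restrict_apply ((meas_nn J) measurableSet_Iic), smul_eq_mul, smul_eq_mul]
  rcases le_or_gt a 0 with ha | ha
  · have e1 : Set.Iic a ∩ Set.Ioc (0:ℝ) 1 = ∅ := by
      ext t; simp; intro h1 h2; linarith
    have e2 : nn J ⁻¹' Set.Iic a ∩ (fundamentalCone K ∩ {x | nn J x ≤ 1}) = ∅ := by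
      ext x
      simp only [Set.mem_inter_iff, Set.mem_preimage, Set.mem_Iic, Set.mem_ofPred_eq,
        Set.mem_empty_iff_false, iff_false, not_and]
      intro h1 h2
      have := mul_pos (cone_norm_pos x h2) hJ0
      have h3 : mixedEmbedding.norm x * nI J ≤ a := h1
      linarith
    rw [e1, e2]; simp
  · set b := min a 1 with hb
    have hb0 : 0 < b := lt_min ha one_pos
    have e1 : Set.Iic a ∩ Set.Ioc (0:ℝ) 1 = Set.Ioc 0 b := by
      ext t; simp [hb]; tauto
    have e2 : nn J ⁻¹' Set.Iic a ∩ (fundamentalCone K ∩ {x | nn J x ≤ 1}) =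
        fundamentalCone K ∩ {x : Vm K | mixedEmbedding.norm x ≤ b / nI J} := by
      ext x
      simp only [Set.mem_inter_iff, Set.mem_preimage, Set.mem_Iic, Set.mem_ofPred_eq,
        le_div_iff₀ hJ0, hb, le_min_iff, nn]
      tauto
    rw [e1, e2, vol_cone_le _ (by positivity), Real.volume_Ioc, ← ENNReal.ofReal_mul hJ0.le,
      ← ENNReal.ofReal_mul (V0_nonneg K)]
    congr 1
    field_simp
    ring

lemma ae_map_Ioc {Ω : Type} [MeasurableSpace Ω] (μ : Measure Ω) (n : Ω → ℝ) (hn : Measurable n)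
    (V : ℝ) (h : μ.map n = ENNReal.ofReal V • volume.restrict (Set.Ioc (0:ℝ) 1)) :
    ∀ᵐ x ∂μ, 0 < n x ∧ n x ≤ 1 := by
  have h1 : ∀ᵐ t ∂(μ.map n), t ∈ Set.Ioc (0:ℝ) 1 := by
    rw [h]
    exact Measure.ae_smul_measure (ae_restrict_mem measurableSet_Ioc) _
  exact ae_of_ae_map hn.aemeasurable h1

lemma integrable_rpow_n {Ω : Type} [MeasurableSpace Ω] (μ : Measure Ω) (n : Ω → ℝ)
    (hn : Measurable n) (V : ℝ)
    (h : μ.map n = ENNReal.ofReal V • volume.restrict (Set.Ioc (0:ℝ) 1)) (a : ℝ) (ha : -1 < a) :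
    Integrable (fun x => n x ^ a) μ := by
  have h1 : Integrable (fun t : ℝ => t ^ a) (μ.map n) := by
    rw [h]
    refine Integrable.smul_measure ?_ (by simp)
    have := intervalIntegral.intervalIntegrable_rpow' (a := 0) (b := 1) ha
    rwa [intervalIntegrable_iff_integrableOn_Ioc_of_le zero_le_one] at this
  exact h1.comp_measurable hn

lemma integral_rpow_n {Ω : Type} [MeasurableSpace Ω] (μ : Measure Ω) (n : Ω → ℝ)
    (hn : Measurable n) (V : ℝ) (hV : 0 ≤ V)
    (h : μ.map n = ENNReal.ofReal V • volume.restrict (Set.Ioc (0:ℝ) 1)) (a : ℝ) (ha : -1 < a) :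
    ∫ x, n x ^ a ∂μ = V / (a + 1) := by
  have hm : Measurable (fun t : ℝ => t ^ a) := by fun_prop
  rw [← integral_map (f := fun t : ℝ => t ^ a) hn.aemeasurable hm.aestronglyMeasurable, h,
    integral_smul_measure, ← intervalIntegral.integral_of_le zero_le_one,
    integral_rpow (Or.inl ha), ENNReal.toReal_ofReal hV, Real.zero_rpow (by linarith)]
  simp
  ring

lemma integral_cpow_n {Ω : Type} [MeasurableSpace Ω] (μ : Measure Ω) (n : Ω → ℝ)
    (hn : Measurable n) (V : ℝ) (hV : 0 ≤ V)
    (h : μ.map n = ENNReal.ofReal V • volume.restrict (Set.Ioc (0:ℝ) 1)) (a : ℂ) (ha : -1 < a.re) :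
    ∫ x, (n x : ℂ) ^ a ∂μ = V / (a + 1) := by
  have hm : Measurable (fun t : ℝ => (t : ℂ) ^ a) := by fun_prop
  have h0 : a + 1 ≠ 0 := by
    intro h
    have := congrArg Complex.re h
    simp at this
    linarith
  rw [← integral_map (f := fun t : ℝ => (t : ℂ) ^ a) hn.aemeasurable hm.aestronglyMeasurable, h,
    integral_smul_measure, ← intervalIntegral.integral_of_le zero_le_one,
    integral_cpow (Or.inl ha), ENNReal.toReal_ofReal hV]
  simp [Complex.zero_cpow h0]
  ring

lemma mellin_bound {Ω : Type} [MeasurableSpace Ω] (μ : Measure Ω) (n : Ω → ℝ)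
    (hn : Measurable n) (V : ℝ) (hV : 0 ≤ V)
    (h : μ.map n = ENNReal.ofReal V • volume.restrict (Set.Ioc (0:ℝ) 1))
    (E : Ω → ℝ) (hE : Measurable E) (M δ : ℝ) 
    (hb : ∀ x, 0 < n x → n x ≤ 1 → |E x| ≤ M * n x ^ (δ - 1)) (s : ℂ) (hs : 1 - δ < s.re) :
    Integrable (fun x => (E x : ℂ) * (n x : ℂ) ^ (s - 1)) μ ∧
    ‖∫ x, (E x : ℂ) * (n x : ℂ) ^ (s - 1) ∂μ‖ ≤ M * (V / (s.re - 1 + δ)) := by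
  have hbd : ∀ᵐ x ∂μ, ‖(E x : ℂ) * (n x : ℂ) ^ (s - 1)‖ ≤ M * n x ^ (s.re + δ - 2) := by
    filter_upwards [ae_map_Ioc μ n hn V h] with x hx
    rw [norm_mul, Complex.norm_real, Complex.norm_cpow_eq_rpow_re_of_pos hx.1, Real.norm_eq_abs]
    have := mul_le_mul_of_nonneg_right (hb x hx.1 hx.2)
      (Real.rpow_nonneg hx.1.le (s - 1).re)
    refine this.trans (le_of_eq ?_)
    rw [mul_assoc, ← Real.rpow_add hx.1]
    congr 2
    simp
    ring
  have hIntg := (integrable_rpow_n μ n hn V h (s.re + δ - 2) (by linarith)).const_mul M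
  refine ⟨hIntg.mono' ?_ hbd, ?_⟩
  · exact Measurable.aestronglyMeasurable (by fun_prop)
  · refine (norm_integral_le_of_norm_le hIntg hbd).trans (le_of_eq ?_)
    rw [integral_const_mul, integral_rpow_n μ n hn V hV h _ (by linarith)]
    congr 2
    ring

lemma mellin_diff {Ω : Type} [MeasurableSpace Ω] (μ : Measure Ω) (n : Ω → ℝ)
    (hn : Measurable n) (V : ℝ)  (hV : 0 ≤ V)
    (h : μ.map n = ENNReal.ofReal V • volume.restrict (Set.Ioc (0:ℝ) 1))
    (E : Ω → ℝ) (hE : Measurable E) (M δ : ℝ) (hM : 0 ≤ M)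
    (hb : ∀ x, 0 < n x → n x ≤ 1 → |E x| ≤ M * n x ^ (δ - 1)) :
    DifferentiableOn ℂ (fun s => ∫ x, (E x : ℂ) * (n x : ℂ) ^ (s - 1) ∂μ)
      {s : ℂ | 1 - δ < s.re} := by
  intro s0 hs0
  have hs0' : 1 - δ < s0.re := hs0
  set a := s0.re - 1 + δ with ha
  have ha0 : 0 < a := by linarith
  have hball : ∀ s ∈ Metric.ball s0 (a / 4), s0.re - a / 4 < s.re := by
    intro s hs
    rw [mem_ball_iff_norm] at hs
    have := (Complex.abs_re_le_norm (s - s0)).trans_lt hs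
    rw [Complex.sub_re, abs_lt] at this
    linarith [this.1]
  have key := hasDerivAt_integral_of_dominated_loc_of_deriv_le (μ := μ)
    (F := fun s x => (E x : ℂ) * (n x : ℂ) ^ (s - 1))
    (F' := fun s x => (E x : ℂ) * ((n x : ℂ) ^ (s - 1) * Complex.log (n x)))
    (x₀ := s0) (s := Metric.ball s0 (a / 4))
    (bound := fun x => M * (4 / a) * n x ^ (a / 2 - 1))
    (Metric.ball_mem_nhds s0 (by positivity))
    (Filter.Eventually.of_forall fun s => Measurable.aestronglyMeasurable (by fun_prop))
    (mellin_bound μ n hn V hV h E hE M δ hb s0 hs0').1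
    (Measurable.aestronglyMeasurable (by fun_prop))
    ?_ ((integrable_rpow_n μ n hn V h _ (by linarith)).const_mul _) ?_
  · exact key.2.differentiableAt.differentiableWithinAt
  · filter_upwards [ae_map_Ioc μ n hn V h] with x hx s hs
    have hs' := hball s hs
    have hlog : |Real.log (n x)| * n x ^ (a / 4) ≤ 4 / a := by
      have := Real.abs_log_mul_self_rpow_lt (n x) (a / 4) hx.1 hx.2 (by positivity)
      rw [abs_mul, abs_of_nonneg (Real.rpow_nonneg hx.1.le _)] at this
      refine this.le.trans (le_of_eq ?_)
      field_simp
    rw [norm_mul, norm_mul, Complex.norm_real, Complex.norm_cpow_eq_rpow_re_of_pos hx.1,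
      ← Complex.ofReal_log hx.1.le, Complex.norm_real, Real.norm_eq_abs, Real.norm_eq_abs]
    calc |E x| * (n x ^ (s - 1).re * |Real.log (n x)|)
        ≤ (M * n x ^ (δ - 1)) * (n x ^ (s0.re - a / 4 - 1) * |Real.log (n x)|) := by
          refine mul_le_mul (hb x hx.1 hx.2) ?_ (by positivity [Real.rpow_nonneg hx.1.le (s-1).re])
            (mul_nonneg hM (Real.rpow_nonneg hx.1.le _))
          refine mul_le_mul_of_nonneg_right ?_ (abs_nonneg _)
          refine Real.rpow_le_rpow_of_exponent_ge hx.1 hx.2 ?_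
          simp; linarith
      _ = M * (|Real.log (n x)| * n x ^ (a / 4)) * n x ^ (a / 2 - 1) := by
          have e : n x ^ (δ - 1) * n x ^ (s0.re - a / 4 - 1) =
              n x ^ (a / 4) * n x ^ (a / 2 - 1) := by
            rw [← Real.rpow_add hx.1, ← Real.rpow_add hx.1]
            congr 1
            rw [ha]; ring
          linear_combination M * |Real.log (n x)| * e
      _ ≤ M * (4 / a) * n x ^ (a / 2 - 1) := by
          refine mul_le_mul_of_nonneg_right (mul_le_mul_of_nonneg_left hlog hM)
            (Real.rpow_nonneg hx.1.le _)
  · filter_upwards [ae_map_Ioc μ n hn V h] with x hx s hs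
    have hx0 : (n x : ℂ) ≠ 0 := by exact_mod_cast hx.1.ne'
    have := ((hasDerivAt_id s).sub_const 1).const_cpow (c := (n x : ℂ)) (Or.inl hx0)
    simpa using this.const_mul (E x : ℂ)

end P8
end Stmt12

open NumberField

namespace Stmt12

section P9
open NumberField.mixedEmbedding NumberField.InfinitePlace MeasureTheory Module
open scoped Classical ENNReal NNReal nonZeroDivisors IntermediateField Pointwise
variable {K : Type} [Field K] [NumberField K]

lemma meas_cnt (J : (Ideal (𝓞 K))⁰) : Measurable (cnt J) := by
  have := countable_OK K
  have hB : MeasurableSet (Metric.closedBall (0 : Vm K) 1) :=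
    Metric.isClosed_closedBall.measurableSet
  have hind : Measurable ((Metric.closedBall (0 : Vm K) 1).indicator (1 : Vm K → ℝ≥0∞)) :=
    measurable_one.indicator hB
  unfold cnt
  exact Measurable.ennreal_tsum fun a => hind.comp (measurable_const_mul (mE a.1))

lemma lint_one (J : (Ideal (𝓞 K))⁰) (k : ℝ → ℝ≥0∞) :
    ∫⁻ x, cnt J x * k (nn J x) ∂(muJ J) = ENNReal.ofReal (nI J) *
      ∫⁻ x in fundamentalCone K, cnt J x * k (mixedEmbedding.norm x * nI J) := by
  rw [muJ, lintegral_smul_measure, smul_eq_mul]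
  congr 1
  have hm : MeasurableSet (fundamentalCone K ∩ {x | nn J x ≤ 1}) :=
    meas_cone.inter ((meas_nn J) measurableSet_Iic)
  rw [← lintegral_indicator hm, ← lintegral_indicator meas_cone]
  refine lintegral_congr fun x => ?_
  by_cases hx : x ∈ fundamentalCone K
  · by_cases h1 : nn J x ≤ 1
    · rw [Set.indicator_of_mem (show x ∈ fundamentalCone K ∩ {x | nn J x ≤ 1} from ⟨hx, h1⟩), Set.indicator_of_mem hx]
    · rw [Set.indicator_of_notMem (fun h => h1 h.2), Set.indicator_of_mem hx,
        cnt_eq_zero J x (not_le.mp h1), zero_mul]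
  · rw [Set.indicator_of_notMem (fun h => hx h.1), Set.indicator_of_notMem hx]

lemma lint_eq (k : ℝ → ℝ≥0∞) (hk : Measurable k) :
    ∑ C : ClassGroup (𝓞 K), ∫⁻ x, cnt (rep C) x * k (nn (rep C) x) ∂(muJ (rep C)) =
      Units.torsionOrder K * ∑' I : {I : Ideal (𝓞 K) // I ≠ ⊥},
        (ENNReal.ofReal (Ideal.absNorm I.1 : ℝ))⁻¹ *
        ∫⁻ b in Metric.closedBall (0 : Vm K) 1,
          k (mixedEmbedding.norm b / (Ideal.absNorm I.1 : ℝ)) := by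
  rw [← unfold_all k hk]
  exact Finset.sum_congr rfl fun C _ => lint_one _ k

lemma absNorm_pos (I : {I : Ideal (𝓞 K) // I ≠ ⊥}) : (1 : ℝ) ≤ (Ideal.absNorm I.1 : ℝ) := by
  have : Ideal.absNorm I.1 ≠ 0 := by
    rw [ne_eq, Ideal.absNorm_eq_zero_iff]; exact I.2
  exact_mod_cast Nat.one_le_iff_ne_zero.mpr this

/-- class number -/
noncomputable def hK (K : Type) [Field K] [NumberField K] : ℝ := Fintype.card (ClassGroup (𝓞 K))

lemma hK_nonneg (K : Type) [Field K] [NumberField K] : 0 ≤ hK K := by unfold hK; positivity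

lemma wK_pos (K : Type) [Field K] [NumberField K] : (0 : ℝ) < Units.torsionOrder K := by
  exact_mod_cast Units.torsionOrder_pos K

lemma cnt_ge_one (J : (Ideal (𝓞 K))⁰) (x : Vm K) (h0 : 0 < nn J x) (h1 : nn J x ≤ ((4 * Dk K)⁻¹) ^ (finrank ℚ K)) :
    1 ≤ cnt J x := by
  have hJ := one_le_nI J
  have hx : mixedEmbedding.norm x ≠ 0 := by
    intro h; simp [nn, h] at h0
  obtain ⟨a, haJ, ha0, ha⟩ := exists_short J x hx
  have hD := one_le_Dk K
  have hd : (finrank ℚ K : ℝ) ≠ 0 := by exact_mod_cast finrank_pos.ne'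
  have h2 : (nn J x) ^ (1 / (finrank ℚ K : ℝ)) ≤ (4 * Dk K)⁻¹ := by
    have := Real.rpow_le_rpow h0.le h1 (by positivity : 0 ≤ 1 / (finrank ℚ K : ℝ))
    rwa [← Real.rpow_natCast, ← Real.rpow_mul (by positivity), mul_one_div_cancel hd,
      Real.rpow_one] at this
  have h3 : ‖x * mE a‖ ≤ 1 := by
    refine ha.trans ?_
    calc 4 * Dk K * (nn J x) ^ (1 / (finrank ℚ K : ℝ)) ≤ 4 * Dk K * (4 * Dk K)⁻¹ :=
          mul_le_mul_of_nonneg_left h2 (by positivity)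
      _ = 1 := mul_inv_cancel₀ (by positivity)
  unfold cnt
  refine le_trans ?_ (ENNReal.le_tsum ⟨a, haJ, ha0⟩)
  rw [Set.indicator_of_mem]
  · simp
  · rw [mem_closedBall_zero_iff, mul_comm]; exact h3

lemma zeta_two (d : ℕ) (hd : finrank ℚ K = d) :
    ∑' I : {I : Ideal (𝓞 K) // I ≠ ⊥}, ENNReal.ofReal ((Ideal.absNorm I.1 : ℝ) ^ (-2 : ℝ)) ≤
      ENNReal.ofReal ((∑' n : ℕ, (n : ℝ) ^ (-2 : ℝ)) ^ d) := by
  rw [ENNReal.tsum_eq_iSup_sum]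
  refine iSup_le fun S => ?_
  rw [← ENNReal.ofReal_sum_of_nonneg (fun i _ => by positivity)]
  exact ENNReal.ofReal_le_ofReal (zeta_sum_le d hd 2 (by norm_num) S)

lemma hV_bound (d : ℕ) (hd : finrank ℚ K = d) :
    hK K * V0 K ≤ Units.torsionOrder K * (4 * (4 * Dk K) ^ (2 * d) *
      (4 ^ d * (∑' n : ℕ, (n : ℝ) ^ (-2 : ℝ)) ^ d)) := by
  have hD := one_le_Dk K
  set t : ℝ := ((4 * Dk K)⁻¹) ^ (finrank ℚ K) with ht
  have ht0 : 0 < t := by positivity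
  have ht1 : t ≤ 1 := pow_le_one₀ (by positivity) (inv_le_one_of_one_le₀ (by linarith))
  set ζ2 : ℝ := (∑' n : ℕ, (n : ℝ) ^ (-2 : ℝ)) ^ d with hζ2
  have hζ0 : 0 ≤ ζ2 := pow_nonneg (tsum_nonneg fun n => by positivity) _
  have hk : Measurable (fun u : ℝ => ENNReal.ofReal u) := ENNReal.measurable_ofReal
  have key := lint_eq (K := K) (fun u => ENNReal.ofReal u) hk
  -- lower bound
  have hlow : ∀ C : ClassGroup (𝓞 K), ENNReal.ofReal (V0 K * (t / 2) * (t / 2)) ≤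
      ∫⁻ x, cnt (rep C) x * ENNReal.ofReal (nn (rep C) x) ∂(muJ (rep C)) := by
    intro C
    have hm : MeasurableSet (nn (rep C) ⁻¹' (Set.Ioc (t / 2) t)) := (meas_nn _) measurableSet_Ioc
    have e : muJ (rep C) (nn (rep C) ⁻¹' (Set.Ioc (t / 2) t)) = ENNReal.ofReal (V0 K * (t / 2)) := by
      rw [← Measure.map_apply (meas_nn _) measurableSet_Ioc, muJ_map, Measure.smul_apply,
        Measure.restrict_apply measurableSet_Ioc]
      have : Set.Ioc (t / 2) t ∩ Set.Ioc 0 1 = Set.Ioc (t / 2) t := by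
        rw [Set.inter_eq_left]
        intro y hy
        exact ⟨by linarith [hy.1], hy.2.trans ht1⟩
      rw [this, Real.volume_Ioc, smul_eq_mul, ← ENNReal.ofReal_mul (V0_nonneg K)]
      congr 1; ring
    rw [ENNReal.ofReal_mul (by have := V0_nonneg K; positivity), ← e, mul_comm,
      ← setLIntegral_const, ← lintegral_indicator hm]
    refine lintegral_mono fun x => ?_
    by_cases hx : x ∈ nn (rep C) ⁻¹' (Set.Ioc (t / 2) t)
    · rw [Set.indicator_of_mem hx]
      have hx' : t / 2 < nn (rep C) x ∧ nn (rep C) x ≤ t := hx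
      have h1 := cnt_ge_one (rep C) x (by linarith) hx'.2
      calc ENNReal.ofReal (t / 2) = 1 * ENNReal.ofReal (t / 2) := (one_mul _).symm
        _ ≤ _ := mul_le_mul' h1 (ENNReal.ofReal_le_ofReal hx'.1.le)
    · rw [Set.indicator_of_notMem hx]; exact zero_le
  have hL : ENNReal.ofReal (hK K * (V0 K * (t / 2) * (t / 2))) ≤
      ∑ C : ClassGroup (𝓞 K), ∫⁻ x, cnt (rep C) x * ENNReal.ofReal (nn (rep C) x) ∂(muJ (rep C)) := by
    calc ENNReal.ofReal (hK K * (V0 K * (t / 2) * (t / 2)))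
        = ∑ C : ClassGroup (𝓞 K), ENNReal.ofReal (V0 K * (t / 2) * (t / 2)) := by
          rw [Finset.sum_const, Finset.card_univ, nsmul_eq_mul, hK,
            ENNReal.ofReal_mul (by positivity), ENNReal.ofReal_natCast]
      _ ≤ _ := Finset.sum_le_sum fun C _ => hlow C
  have hR : ∑' I : {I : Ideal (𝓞 K) // I ≠ ⊥},
        (ENNReal.ofReal (Ideal.absNorm I.1 : ℝ))⁻¹ *
        ∫⁻ b in Metric.closedBall (0 : Vm K) 1,
          ENNReal.ofReal (mixedEmbedding.norm b / (Ideal.absNorm I.1 : ℝ)) ≤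
      ENNReal.ofReal ((vB K : ℝ) * ζ2) := by
    have h1 : ∀ I : {I : Ideal (𝓞 K) // I ≠ ⊥}, (ENNReal.ofReal (Ideal.absNorm I.1 : ℝ))⁻¹ *
        ∫⁻ b in Metric.closedBall (0 : Vm K) 1,
          ENNReal.ofReal (mixedEmbedding.norm b / (Ideal.absNorm I.1 : ℝ)) ≤
        (vB K : ℝ≥0∞) * ENNReal.ofReal ((Ideal.absNorm I.1 : ℝ) ^ (-2 : ℝ)) := by
      intro I
      have hI := absNorm_pos I
      have h2 : ∫⁻ b in Metric.closedBall (0 : Vm K) 1,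
          ENNReal.ofReal (mixedEmbedding.norm b / (Ideal.absNorm I.1 : ℝ)) ≤
          ENNReal.ofReal (1 / (Ideal.absNorm I.1 : ℝ)) * vB K := by
        rw [← vol_closedBall, ← setLIntegral_const]
        refine setLIntegral_mono measurable_const fun x hx => ENNReal.ofReal_le_ofReal ?_
        gcongr
        exact norm_le_one_of_mem x hx
      refine (mul_le_mul_right h2 _).trans (le_of_eq ?_)
      rw [← mul_assoc, mul_comm, ← ENNReal.ofReal_inv_of_pos (by linarith),
        ← ENNReal.ofReal_mul (by positivity)]
      congr 2
      rw [Real.rpow_neg (by linarith), Real.rpow_two]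
      field_simp
    refine (ENNReal.tsum_le_tsum h1).trans ?_
    rw [ENNReal.tsum_mul_left, ENNReal.ofReal_mul (by positivity), ENNReal.ofReal_coe_nnreal]
    exact mul_le_mul_right (zeta_two d hd) _
  have hfin : ENNReal.ofReal (hK K * (V0 K * (t / 2) * (t / 2))) ≤
      ENNReal.ofReal (Units.torsionOrder K * ((vB K : ℝ) * ζ2)) := by
    refine hL.trans ?_
    rw [key, ENNReal.ofReal_mul (by positivity), ENNReal.ofReal_natCast]
    exact mul_le_mul_right hR _
  have hfin2 := (ENNReal.ofReal_le_ofReal_iff (by positivity)).mp hfin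
  have hvB : (vB K : ℝ) ≤ 4 ^ d := hd ▸ vB_le K
  have ht2 : (4 * Dk K) ^ (2 * d) * t ^ 2 = 1 := by
    rw [ht, hd, ← pow_mul, mul_comm d 2, ← mul_pow, mul_inv_cancel₀ (by positivity), one_pow]
  have hw := wK_pos K
  have h5 : hK K * V0 K * t ^ 2 ≤ Units.torsionOrder K * (4 * (4 ^ d * ζ2)) := by
    have : (Units.torsionOrder K : ℝ) * ((vB K : ℝ) * ζ2) ≤ Units.torsionOrder K * (4 ^ d * ζ2) := by
      gcongr
    nlinarith
  calc hK K * V0 K = (hK K * V0 K * t ^ 2) * (4 * Dk K) ^ (2 * d) := by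
        linear_combination (-(hK K * V0 K)) * ht2
    _ ≤ (Units.torsionOrder K * (4 * (4 ^ d * ζ2))) * (4 * Dk K) ^ (2 * d) := by gcongr
    _ = _ := by ring

end P9
end Stmt12

open NumberField

namespace Stmt12

section P10
open NumberField.mixedEmbedding NumberField.InfinitePlace MeasureTheory Module
open scoped Classical ENNReal NNReal nonZeroDivisors IntermediateField Pointwise
variable {K : Type} [Field K] [NumberField K]

/-- error term -/
noncomputable def errJ (J : (Ideal (𝓞 K))⁰) (x : Vm K) : ℝ := (cnt J x).toReal - kap K / nn J x

lemma meas_errJ (J : (Ideal (𝓞 K))⁰) : Measurable (errJ J) :=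
  (meas_cnt J).ennreal_toReal.sub (measurable_const.div (meas_nn J))

lemma nn_ne (J : (Ideal (𝓞 K))⁰) (x : Vm K) (h : 0 < nn J x) : mixedEmbedding.norm x ≠ 0 := by
  intro h'
  simp [nn, h'] at h

lemma errJ_le (J : (Ideal (𝓞 K))⁰) (x : Vm K) (h0 : 0 < nn J x) (h1 : nn J x ≤ 1) :
    |errJ J x| ≤ M0 K * nn J x ^ (1 / (finrank ℚ K : ℝ) - 1) :=
  (cnt_bound J x (nn_ne J x h0) _ rfl h1).2

/-- Mellin transform of the error -/
noncomputable def HJ (J : (Ideal (𝓞 K))⁰) (s : ℂ) : ℂ :=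
  ∫ x, (errJ J x : ℂ) * (nn J x : ℂ) ^ (s - 1) ∂(muJ J)

lemma M0_nonneg (K : Type) [Field K] [NumberField K] : 0 ≤ M0 K := by
  have := kap_pos K
  have := rho0_nonneg K
  unfold M0
  positivity

lemma HJ_diff (J : (Ideal (𝓞 K))⁰) :
    DifferentiableOn ℂ (HJ J) {s : ℂ | 1 - 1 / (finrank ℚ K : ℝ) < s.re} :=
  mellin_diff (muJ J) (nn J) (meas_nn J) (V0 K) (V0_nonneg K) (muJ_map J) (errJ J) (meas_errJ J)
    (M0 K) _ (M0_nonneg K) (errJ_le J)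

lemma HJ_bound (J : (Ideal (𝓞 K))⁰) (s : ℂ) (hs : 1 - 1 / (finrank ℚ K : ℝ) < s.re) :
    ‖HJ J s‖ ≤ M0 K * (V0 K / (s.re - 1 + 1 / (finrank ℚ K : ℝ))) :=
  (mellin_bound (muJ J) (nn J) (meas_nn J) (V0 K) (V0_nonneg K) (muJ_map J) (errJ J) (meas_errJ J)
    (M0 K) _ (errJ_le J) s hs).2

lemma ae_nn (J : (Ideal (𝓞 K))⁰) : ∀ᵐ x ∂(muJ J), 0 < nn J x ∧ nn J x ≤ 1 :=
  ae_map_Ioc (muJ J) (nn J) (meas_nn J) (V0 K) (muJ_map J)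

lemma cnt_int (J : (Ideal (𝓞 K))⁰) (s : ℂ) (hs : 1 < s.re) :
    Integrable (fun x => (cnt J x).toReal • (nn J x : ℂ) ^ (s - 1)) (muJ J) ∧
    ∫ x, (cnt J x).toReal • (nn J x : ℂ) ^ (s - 1) ∂(muJ J) =
      kap K * V0 K / (s - 1) + HJ J s := by
  have hdpos : 0 < 1 / (finrank ℚ K : ℝ) := by
    have : (0:ℝ) < finrank ℚ K := by exact_mod_cast finrank_pos
    positivity
  have hs' : 1 - 1 / (finrank ℚ K : ℝ) < s.re := by linarith
  have hE := (mellin_bound (muJ J) (nn J) (meas_nn J) (V0 K) (V0_nonneg K) (muJ_map J) (errJ J)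
    (meas_errJ J) (M0 K) _ (errJ_le J) s hs').1
  have hre : -1 < (s - 2).re := by simp; linarith
  have h2 : Integrable (fun x => (nn J x : ℂ) ^ (s - 2)) (muJ J) := by
    refine (integrable_rpow_n (muJ J) (nn J) (meas_nn J) (V0 K) (muJ_map J) (s - 2).re hre).mono' ?_ ?_
    · have := meas_nn J
      exact Measurable.aestronglyMeasurable (by fun_prop)
    · filter_upwards [ae_nn J] with x hx
      rw [Complex.norm_cpow_eq_rpow_re_of_pos hx.1]
  have h3 := h2.const_mul (kap K : ℂ)
  have hae : (fun x => (cnt J x).toReal • (nn J x : ℂ) ^ (s - 1)) =ᵐ[muJ J]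
      fun x => (kap K : ℂ) * (nn J x : ℂ) ^ (s - 2) + (errJ J x : ℂ) * (nn J x : ℂ) ^ (s - 1) := by
    filter_upwards [ae_nn J] with x hx
    have hx0 : (nn J x : ℂ) ≠ 0 := by exact_mod_cast hx.1.ne'
    have e : s - 2 = (s - 1) - 1 := by ring
    have e1 : (nn J x : ℂ) ^ (s - 2) = (nn J x : ℂ) ^ (s - 1) / (nn J x : ℂ) := by
      rw [e, Complex.cpow_sub _ 1 hx0, Complex.cpow_one]
    rw [e1, Complex.real_smul, errJ, Complex.ofReal_sub, Complex.ofReal_div]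
    generalize (nn J x : ℂ) ^ (s - 1) = p
    ring
  refine ⟨(h3.add hE).congr hae.symm, ?_⟩
  rw [integral_congr_ae hae, integral_add h3 hE, integral_const_mul,
    integral_cpow_n (muJ J) (nn J) (meas_nn J) (V0 K) (V0_nonneg K) (muJ_map J) _ hre, HJ]
  congr 1
  have e : s - 2 + 1 = s - 1 := by ring
  rw [e, mul_div_assoc]

lemma cnt_fin (J : (Ideal (𝓞 K))⁰) : ∀ᵐ x ∂(muJ J), cnt J x < ⊤ := by
  filter_upwards [ae_nn J] with x hx
  exact (cnt_bound J x (nn_ne J x hx.1) _ rfl hx.2).1.lt_top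

/-- left measure -/
noncomputable def nuL (K : Type) [Field K] [NumberField K] (C : ClassGroup (𝓞 K)) : Measure ℝ :=
  ((muJ (rep C)).withDensity (cnt (rep C))).map (nn (rep C))

/-- right measure -/
noncomputable def nuR (K : Type) [Field K] [NumberField K] (I : {I : Ideal (𝓞 K) // I ≠ ⊥}) :
    Measure ℝ :=
  (ENNReal.ofReal (Ideal.absNorm I.1 : ℝ))⁻¹ •
    (volume.restrict (Metric.closedBall (0 : Vm K) 1)).map
      (fun b => mixedEmbedding.norm b / (Ideal.absNorm I.1 : ℝ))

lemma nu_eq (K : Type) [Field K] [NumberField K] :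
    ∑ C, nuL K C = (Units.torsionOrder K : ℝ≥0∞) • Measure.sum (nuR K) := by
  ext A hA
  have key := lint_eq (K := K) (A.indicator 1) (measurable_one.indicator hA)
  rw [Measure.finsetSum_apply, Measure.smul_apply, Measure.sum_apply _ hA, smul_eq_mul]
  refine Eq.trans ?_ (key.trans ?_)
  · refine Finset.sum_congr rfl fun C _ => ?_
    rw [nuL, Measure.map_apply (meas_nn _) hA, withDensity_apply _ (meas_nn _ hA),
      ← lintegral_indicator (meas_nn _ hA)]
    refine lintegral_congr fun x => ?_
    by_cases hx : nn (rep C) x ∈ A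
    · rw [Set.indicator_of_mem (show x ∈ nn (rep C) ⁻¹' A from hx), Set.indicator_of_mem hx]; simp
    · rw [Set.indicator_of_notMem (show x ∉ nn (rep C) ⁻¹' A from hx), Set.indicator_of_notMem hx]
      simp
  · congr 1
    refine tsum_congr fun I => ?_
    have hm : Measurable (fun b : Vm K => mixedEmbedding.norm b / (Ideal.absNorm I.1 : ℝ)) :=
      meas_norm.div_const _
    rw [nuR, Measure.smul_apply, smul_eq_mul, ← lintegral_indicator_one hA, lintegral_map
      (measurable_one.indicator hA) hm]
    

lemma zeta_identity (K : Type) [Field K] [NumberField K] (s : ℂ) (hs : 1 < s.re) :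
    (Units.torsionOrder K : ℂ) * ((vB K : ℝ) / s ^ (nrRealPlaces K + nrComplexPlaces K) *
      ∑' I : {I : Ideal (𝓞 K) // I ≠ ⊥}, (Ideal.absNorm (I : Ideal (𝓞 K)) : ℂ) ^ (-s)) =
    hK K * (kap K * V0 K / (s - 1)) + ∑ C : ClassGroup (𝓞 K), HJ (rep C) s := by
  have hf : Measurable (fun t : ℝ => (t : ℂ) ^ (s - 1)) := by fun_prop
  have hwd : ∀ C : ClassGroup (𝓞 K), Integrable (fun t : ℝ => (t : ℂ) ^ (s - 1)) (nuL K C) ∧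
      ∫ t, (t : ℂ) ^ (s - 1) ∂(nuL K C) = kap K * V0 K / (s - 1) + HJ (rep C) s := by
    intro C
    have h := cnt_int (rep C) s hs
    constructor
    · rw [nuL, integrable_map_measure hf.aestronglyMeasurable (meas_nn _).aemeasurable,
        integrable_withDensity_iff_integrable_smul' (meas_cnt _) (cnt_fin _)]
      exact h.1
    · rw [nuL, integral_map (meas_nn _).aemeasurable hf.aestronglyMeasurable,
        integral_withDensity_eq_integral_toReal_smul (meas_cnt _) (cnt_fin _), h.2]
  have hL : ∫ t, (t : ℂ) ^ (s - 1) ∂(∑ C, nuL K C) =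
      hK K * (kap K * V0 K / (s - 1)) + ∑ C : ClassGroup (𝓞 K), HJ (rep C) s := by
    rw [integral_finsetSum_measure fun C _ => (hwd C).1]
    simp_rw [fun C => (hwd C).2]
    rw [Finset.sum_add_distrib, Finset.sum_const, Finset.card_univ, nsmul_eq_mul, hK]
    simp
  have hIL : Integrable (fun t : ℝ => (t : ℂ) ^ (s - 1)) (∑ C, nuL K C) := by
    rw [integrable_finsetSum_measure]
    exact fun C _ => (hwd C).1
  have hw := wK_pos K
  have hw0 : (Units.torsionOrder K : ℝ≥0∞) ≠ 0 := by
    have := Units.torsionOrder_pos K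
    exact_mod_cast this.ne'
  rw [nu_eq] at hL hIL
  have hIR : Integrable (fun t : ℝ => (t : ℂ) ^ (s - 1)) (Measure.sum (nuR K)) := by
    rwa [integrable_smul_measure hw0 (by simp)] at hIL
  rw [integral_smul_measure, ← (hasSum_integral_measure hIR).tsum_eq] at hL
  rw [← hL, Complex.real_smul]
  simp only [ENNReal.toReal_natCast, Complex.ofReal_natCast]
  congr 1
  rw [← tsum_mul_left]
  refine tsum_congr fun I => ?_
  have hI := absNorm_pos I
  have hm : Measurable (fun b : Vm K => mixedEmbedding.norm b / (Ideal.absNorm I.1 : ℝ)) :=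
      meas_norm.div_const _
  rw [nuR, integral_smul_measure, integral_map hm.aemeasurable hf.aestronglyMeasurable]
  have e : ∀ b : Vm K, ((mixedEmbedding.norm b / (Ideal.absNorm I.1 : ℝ) : ℝ) : ℂ) ^ (s - 1) =
      (((Ideal.absNorm I.1 : ℝ)⁻¹ : ℝ) : ℂ) ^ (s - 1) * ((mixedEmbedding.norm b : ℝ) : ℂ) ^ (s - 1) := by
    intro b
    rw [← Complex.mul_cpow_ofReal_nonneg (by positivity) (mixedEmbedding.norm_nonneg b),
      ← Complex.ofReal_mul, div_eq_inv_mul]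
  simp_rw [e]
  rw [integral_const_mul, Zeta_B K s hs, Complex.real_smul, ENNReal.toReal_inv,
    ENNReal.toReal_ofReal (by linarith)]
  have hI0 : ((Ideal.absNorm I.1 : ℕ) : ℂ) ≠ 0 := by
    have : (Ideal.absNorm I.1 : ℝ) ≠ 0 := by linarith
    exact_mod_cast this
  have e2 : (((Ideal.absNorm I.1 : ℝ)⁻¹ : ℝ) : ℂ) ^ (s - 1) =
      ((Ideal.absNorm I.1 : ℕ) : ℂ) ^ (1 - s) := by
    rw [Complex.ofReal_inv, Complex.ofReal_natCast, Complex.inv_cpow _ _ (by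
      rw [Complex.natCast_arg]; exact Real.pi_pos.ne), ← Complex.cpow_neg, neg_sub]
  rw [e2, Complex.ofReal_inv, Complex.ofReal_natCast]
  have e3 : -s = (1 - s) - 1 := by ring
  rw [e3, Complex.cpow_sub _ 1 hI0, Complex.cpow_one]
  field_simp

end P10
end Stmt12

open NumberField

namespace Stmt12

section P11
open NumberField.mixedEmbedding NumberField.InfinitePlace MeasureTheory Module
open scoped Classical ENNReal NNReal nonZeroDivisors IntermediateField Pointwise
variable {K : Type} [Field K] [NumberField K]

/-- the zeta function -/
noncomputable def zK (K : Type) [Field K] [NumberField K] (s : ℂ) : ℂ :=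
  ∑' I : {I : Ideal (𝓞 K) // I ≠ ⊥}, (Ideal.absNorm (I : Ideal (𝓞 K)) : ℂ) ^ (-s)

lemma zK_bound (d : ℕ) (hd : finrank ℚ K = d) (s : ℂ) (hs : 1 < s.re) :
    ‖zK K s‖ ≤ (∑' n : ℕ, (n : ℝ) ^ (-s.re)) ^ d := by
  have e : ∀ I : {I : Ideal (𝓞 K) // I ≠ ⊥}, ‖(Ideal.absNorm (I : Ideal (𝓞 K)) : ℂ) ^ (-s)‖ =
      (Ideal.absNorm I.1 : ℝ) ^ (-s.re) := by
    intro I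
    have hI := absNorm_pos I
    rw [← Complex.ofReal_natCast, Complex.norm_cpow_eq_rpow_re_of_pos (by linarith)]
    simp
  have hb : ∀ S : Finset {I : Ideal (𝓞 K) // I ≠ ⊥},
      ∑ I ∈ S, ‖(Ideal.absNorm (I : Ideal (𝓞 K)) : ℂ) ^ (-s)‖ ≤
        (∑' n : ℕ, (n : ℝ) ^ (-s.re)) ^ d := by
    intro S
    simp_rw [e]
    exact zeta_sum_le d hd s.re hs S
  have hsum := summable_of_sum_le (fun I => _root_.norm_nonneg _) hb
  exact (norm_tsum_le_tsum_norm hsum).trans (hsum.tsum_le_of_sum_le hb)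

lemma one_le_vB (K : Type) [Field K] [NumberField K] : (1 : ℝ) ≤ vB K := by
  have : (1 : ℝ) ≤ 2 ^ nrRealPlaces K * Real.pi ^ nrComplexPlaces K := by
    have h1 : (1 : ℝ) ≤ 2 ^ nrRealPlaces K := one_le_pow₀ (by norm_num)
    have h2 : (1 : ℝ) ≤ Real.pi ^ nrComplexPlaces K :=
      one_le_pow₀ (by linarith [Real.pi_gt_three])
    nlinarith
  simpa [vB, convexBodyLTFactor] using this

/-- constants -/
noncomputable def c1 (d : ℕ) : ℝ := 1 + 4 * (d * (2 ^ d + 2) ^ d)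
/-- constants -/
noncomputable def c2 (d : ℕ) : ℝ := 8 ^ d * c1 d ^ d + 1
/-- constants -/
noncomputable def c3 (d : ℕ) : ℝ :=
  1 + 4 * 4 ^ (2 * d) * (4 ^ d * (∑' n : ℕ, (n : ℝ) ^ (-2 : ℝ)) ^ d) * (8 ^ d + 2 * d * c2 d)

lemma c1_nonneg (d : ℕ) : 0 ≤ c1 d := by unfold c1; positivity
lemma c2_nonneg (d : ℕ) : 0 ≤ c2 d := by have := c1_nonneg d; unfold c2; positivity
lemma zeta2_nonneg : 0 ≤ (∑' n : ℕ, (n : ℝ) ^ (-2 : ℝ)) := tsum_nonneg fun n => by positivity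
lemma one_le_c3 (d : ℕ) : 1 ≤ c3 d := by
  have := c2_nonneg d
  have := zeta2_nonneg
  unfold c3
  have : 0 ≤ 4 * 4 ^ (2 * d) * (4 ^ d * (∑' n : ℕ, (n : ℝ) ^ (-2 : ℝ)) ^ d) *
    (8 ^ d + 2 * d * c2 d) := by positivity
  linarith

lemma kap_le (d : ℕ) (hd : finrank ℚ K = d) : kap K ≤ 8 ^ d := by
  have h1 := vB_le K
  have h2 := qK_inv_le K
  have h3 := qK_pos K
  rw [hd] at h1 h2
  unfold kap
  rw [div_eq_mul_inv]
  calc (vB K : ℝ) * (qK K)⁻¹ ≤ 4 ^ d * 2 ^ d := by gcongr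
    _ = 8 ^ d := by rw [← mul_pow]; norm_num

lemma M0_le (d : ℕ) (hd : finrank ℚ K = d) : M0 K ≤ c2 d * Dk K ^ ((d + 1) * d) := by
  have hD := one_le_Dk K
  have h1 : 1 + rho0 K ≤ c1 d * Dk K ^ (d + 1) := by
    unfold rho0 c1
    rw [hd]
    have a1 : 2 ^ d * Dk K + 2 ≤ (2 ^ d + 2) * Dk K := by nlinarith
    have a2 : (1 : ℝ) ≤ Dk K ^ (d + 1) := one_le_pow₀ hD
    calc 1 + 4 * Dk K * (d * (2 ^ d * Dk K + 2) ^ d)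
        ≤ Dk K ^ (d + 1) + 4 * Dk K * (d * ((2 ^ d + 2) * Dk K) ^ d) := by gcongr
      _ = _ := by rw [mul_pow]; ring
  have h0 := rho0_nonneg K
  have hk := kap_le d hd
  have hk0 := (kap_pos K).le
  have hDD : (1 : ℝ) ≤ Dk K ^ ((d + 1) * d) := one_le_pow₀ hD
  have hc1 := c1_nonneg d
  unfold M0 c2
  rw [hd]
  calc kap K * (1 + rho0 K) ^ d + 1 ≤ 8 ^ d * (c1 d * Dk K ^ (d + 1)) ^ d + Dk K ^ ((d + 1) * d) := by
        gcongr
    _ = _ := by rw [mul_pow, ← pow_mul]; ring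

/-- exponent -/
def expA (d : ℕ) : ℕ := 2 * d + (d + 1) * d

lemma num_bound (hV k w v S M B d e c D : ℝ) (hhV : 0 ≤ hV) (hk0 : 0 ≤ k) (hw : 0 < w)
    (hv : 1 ≤ v) (hS : S ≤ hV * (M * (2 * d))) (hM0 : 0 ≤ M) (hB0 : 0 ≤ B) (hd : 0 ≤ d)
    (he : 0 ≤ e) (hD : 1 ≤ D) (hB : hV ≤ w * B) (hk : k ≤ e) (hM : M ≤ c * D) :
    hV * k / (w * v) + S / (w * v) ≤ B * ((e + 2 * d * c) * D) := by
  have hkM : 0 ≤ k + 2 * d * M := by positivity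
  have h1 : hV * k + S ≤ hV * (k + 2 * d * M) := by linarith
  have h2 : hV * (k + 2 * d * M) ≤ (w * B) * (k + 2 * d * M) := mul_le_mul_of_nonneg_right hB hkM
  have h3 : k + 2 * d * M ≤ (e + 2 * d * c) * D := by nlinarith
  have h4 : B * (k + 2 * d * M) ≤ B * ((e + 2 * d * c) * D) := mul_le_mul_of_nonneg_left h3 hB0
  have h5 : 0 ≤ B * ((e + 2 * d * c) * D) := le_trans (mul_nonneg hB0 hkM) h4
  rw [← add_div, div_le_iff₀ (by positivity)]
  calc hV * k + S ≤ w * (B * (k + 2 * d * M)) := by linarith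
    _ ≤ w * (B * ((e + 2 * d * c) * D)) := mul_le_mul_of_nonneg_left h4 hw.le
    _ ≤ (B * ((e + 2 * d * c) * D)) * (w * v) := by nlinarith [mul_nonneg h5 hw.le]

lemma main_bound (d : ℕ) (hd1 : 1 ≤ d) (hd : finrank ℚ K = d) (s : ℂ)
    (hs : 1 - 1 / (2 * d : ℝ) ≤ s.re) :
    ‖((hK K * V0 K * kap K / (Units.torsionOrder K * vB K) : ℝ) : ℂ)‖ +
      ‖(∑ C : ClassGroup (𝓞 K), HJ (rep C) s) / ((Units.torsionOrder K : ℝ) * (vB K : ℝ) : ℝ)‖ ≤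
      c3 d * Dk K ^ expA d := by
  have hD := one_le_Dk K
  have hw := wK_pos K
  have hv := one_le_vB K
  have hh := hK_nonneg K
  have hV := V0_nonneg K
  have hk := kap_le d hd
  have hk0 := (kap_pos K).le
  have hM := M0_le d hd
  have hM' := M0_nonneg K
  have hB := hV_bound d hd
  have hc2 := c2_nonneg d
  have hz := zeta2_nonneg
  have hd0 : (0 : ℝ) < d := by exact_mod_cast hd1
  have hdd : 1 / (2 * d : ℝ) = (1 / d) / 2 := by field_simp
  have hdp : 0 < 1 / (d : ℝ) := by positivity
  have hsum : ‖∑ C : ClassGroup (𝓞 K), HJ (rep C) s‖ ≤ hK K * (M0 K * V0 K * (2 * d)) := by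
    refine (norm_sum_le _ _).trans ?_
    rw [hK, ← nsmul_eq_mul, ← Finset.card_univ]
    refine Finset.sum_le_card_nsmul _ _ _ fun C _ => ?_
    refine (HJ_bound (rep C) s (by rw [hd]; linarith)).trans ?_
    rw [mul_assoc]
    refine mul_le_mul_of_nonneg_left ?_ hM'
    rw [hd, div_le_iff₀ (by linarith)]
    have : 1 ≤ 2 * (d : ℝ) * (s.re - 1 + 1 / d) := by
      have h1 : 1 / (2 * d : ℝ) ≤ s.re - 1 + 1 / d := by linarith
      calc (1 : ℝ) = 2 * d * (1 / (2 * d)) := by field_simp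
        _ ≤ _ := by gcongr
    nlinarith
  set w : ℝ := (Units.torsionOrder K : ℝ) with hwdef
  set B : ℝ := 4 * (4 * Dk K) ^ (2 * d) * (4 ^ d * (∑' n : ℕ, (n : ℝ) ^ (-2 : ℝ)) ^ d) with hBdef
  have hB0 : 0 ≤ B := by positivity
  rw [norm_div, Complex.norm_real, Complex.norm_real, Real.norm_of_nonneg (by positivity),
    Real.norm_of_nonneg (by positivity)]
  refine (num_bound (hK K * V0 K) (kap K) w (vB K) (‖∑ C : ClassGroup (𝓞 K), HJ (rep C) s‖) (M0 K) B d
    (8 ^ d) (c2 d) (Dk K ^ ((d + 1) * d)) (mul_nonneg hh hV) hk0 hw hv (by linarith) hM' hB0 hd0.le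
    (by positivity) (one_le_pow₀ hD) hB hk hM).trans ?_
  calc B * ((8 ^ d + 2 * d * c2 d) * Dk K ^ ((d + 1) * d)) = (c3 d - 1) * Dk K ^ expA d := by
        rw [hBdef, mul_pow, expA, pow_add, c3]; ring
    _ ≤ c3 d * Dk K ^ expA d := by
        refine mul_le_mul_of_nonneg_right (by linarith) (by positivity)

lemma nr_le (d : ℕ) (hd : finrank ℚ K = d) : nrRealPlaces K + nrComplexPlaces K ≤ d := by
  have := card_add_two_mul_card_eq_rank K
  omega

lemma zK_formula (K : Type) [Field K] [NumberField K] (s : ℂ) (hs : 1 < s.re) :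
    zK K s = s ^ (nrRealPlaces K + nrComplexPlaces K) *
      (((hK K * V0 K * kap K / (Units.torsionOrder K * vB K) : ℝ) : ℂ) / (s - 1) +
        (∑ C : ClassGroup (𝓞 K), HJ (rep C) s) / ((Units.torsionOrder K : ℝ) * (vB K : ℝ) : ℝ)) := by
  have h := zeta_identity K s hs
  have hs0 : s ≠ 0 := by rintro rfl; simp at hs; linarith
  have hs1 : s - 1 ≠ 0 := by
    intro h
    have := congrArg Complex.re h
    simp at this
    linarith
  have hw : ((Units.torsionOrder K : ℕ) : ℂ) ≠ 0 := by
    have := wK_pos K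
    exact_mod_cast this.ne'
  have hv : (((vB K : ℝ≥0) : ℝ) : ℂ) ≠ 0 := by
    have := one_le_vB K
    have h2 : (vB K : ℝ) ≠ 0 := by linarith
    exact_mod_cast h2
  change _ * (_ * zK K s) = _ at h
  generalize (∑ C : ClassGroup (𝓞 K), HJ (rep C) s) = SS at h ⊢
  generalize zK K s = z at h ⊢
  generalize vB K = v at *
  have hp := pow_ne_zero (nrRealPlaces K + nrComplexPlaces K) hs0
  generalize s ^ (nrRealPlaces K + nrComplexPlaces K) = p at *
  push_cast
  generalize ((Units.torsionOrder K : ℕ) : ℂ) = w at *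
  have h2 : z = p * (w * ((v : ℝ) / p * z)) / (w * (v : ℝ)) := by field_simp
  rw [h2, h]
  field_simp

end P11

end Stmt12

open NumberField

theorem stmt_12 (d j : ℕ) (hd : 1 ≤ d) (ε : ℝ) (hε : 0 < ε) :
    ∃ C > (0 : ℝ), ∀ (K : Type) [Field K] [NumberField K], Module.finrank ℚ K = d →
      ∀ g : ℂ → ℂ, Differentiable ℂ g →
        (∀ s : ℂ, 1 < s.re → g s = (s - 1) * ∑' I : {I : Ideal (𝓞 K) // I ≠ ⊥},
            (Ideal.absNorm (I : Ideal (𝓞 K)) : ℂ) ^ (-s)) →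
        ‖iteratedDeriv j g 1‖ / (Nat.factorial j) ≤ C * |(NumberField.discr K : ℝ)| ^ ε := by
  have hd0 : (0 : ℝ) < d := by exact_mod_cast hd
  set A : ℝ := (Stmt12.expA d : ℝ) with hA
  have hA0 : 0 < A := by
    have : 0 < Stmt12.expA d := by unfold Stmt12.expA; omega
    rw [hA]; exact_mod_cast this
  set η : ℝ := min (1 / (4 * d)) (ε / (4 * d * A)) with hη
  have hη0 : 0 < η := lt_min (by positivity) (by positivity)
  have hη1 : η ≤ 1 / (4 * d) := min_le_left _ _
  have hη2 : η ≤ ε / (4 * d * A) := min_le_right _ _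
  set M : ℝ := max 1 ((∑' n : ℕ, (n : ℝ) ^ (-(1 + η))) ^ d) with hM
  have hM1 : 1 ≤ M := le_max_left _ _
  have hc3 := Stmt12.one_le_c3 d
  refine ⟨3 * 2 ^ d * (Stmt12.c3 d ^ (4 * d * η) * M) / η ^ j, by positivity, ?_⟩
  intro K _ _ hK g hg hgz
  have hD := Stmt12.one_le_Dk K
  have key := Stmt12.analytic_core d _ j hd (Stmt12.nr_le d hK) η hη0 hη1
    (Stmt12.c3 d * Stmt12.Dk K ^ Stmt12.expA d) M
    (one_le_mul_of_one_le_of_one_le hc3 (one_le_pow₀ hD)) hM1 _ _ g (Stmt12.zK K)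
    (by
      refine DifferentiableOn.div_const (DifferentiableOn.fun_sum fun C _ => ?_) _
      have := Stmt12.HJ_diff (Stmt12.rep C)
      rw [hK] at this
      exact this)
    (fun s hs => Stmt12.main_bound d hd hK s hs) (Stmt12.zK_formula K) hg hgz
    (by
      intro s hs
      refine (Stmt12.zK_bound d hK s (by linarith)).trans ?_
      rw [hs]
      exact le_max_right _ _)
  refine key.trans ?_
  have h1 : (Stmt12.c3 d * Stmt12.Dk K ^ Stmt12.expA d) ^ (4 * d * η) ≤
      Stmt12.c3 d ^ (4 * d * η) * Stmt12.Dk K ^ ε := by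
    rw [Real.mul_rpow (by linarith) (by positivity)]
    refine mul_le_mul_of_nonneg_left ?_ (by positivity)
    rw [← Real.rpow_natCast, ← Real.rpow_mul (by linarith)]
    refine Real.rpow_le_rpow_of_exponent_le hD ?_
    rw [le_div_iff₀ (by positivity)] at hη2
    linarith
  change _ ≤ _ * Stmt12.Dk K ^ ε
  calc 3 * 2 ^ d * ((Stmt12.c3 d * Stmt12.Dk K ^ Stmt12.expA d) ^ (4 * d * η) * M) / η ^ j
      ≤ 3 * 2 ^ d * ((Stmt12.c3 d ^ (4 * d * η) * Stmt12.Dk K ^ ε) * M) / η ^ j := by gcongr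
    _ = _ := by ring
end
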